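/- arXiv:1512.06047 — 7 statements merged into one kernel-verified Lean document; each statement's English description precedes it below -/
import Mathlib

section
/- Let α₁,…,α_k be K-bilinear maps A × A → A (with α₀(a,b) = a·b) such that D_i = 0 for all 1 ≤ i ≤ k. Define the trilinear map E_{k+1}(a₁,a₂,a₃) = Σ_{s+r=k+1, s≥1, r≥1} [α_r(α_s(a₁,a₂),a₃) − α_r(a₁,α_s(a₂,a₃))]. Then E_{k+1} is a Hochschild 3-cocycle: δE_{k+1} = 0, i.e. for all a₀,a₁,a₂,a₃ ∈ A, a₀·E_{k+1}(a₁,a₂,a₃) − E_{k+1}(a₀·a₁,a₂,a₃) + E_{k+1}(a₀,a₁·a₂,a₃) − E_{k+1}(a₀,a₁,a₂·a₃) + E_{k+1}(a₀,a₁,a₂)·a₃ = 0. -/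
/-- The trilinear map `E_{k+1}(a₁,a₂,a₃) = Σ_{s+r=k+1, s,r ≥ 1}
[α_r(α_s(a₁,a₂),a₃) − α_r(a₁,α_s(a₂,a₃))]` (here `r = k+1-s` with `s ∈ [1,k]`). -/
def Esum {K A : Type*} [CommRing K] [Ring A] [Algebra K A]
    (α : ℕ → A →ₗ[K] A →ₗ[K] A) (k : ℕ) (x y z : A) : A :=
  ∑ s ∈ Finset.Icc 1 k, (α (k + 1 - s) (α s x y) z - α (k + 1 - s) x (α s y z))

/-!
Let `D_n` be the `h^n`-coefficient of the associator of `a * b = ∑ h^r α_r(a, b)` and, for bilinear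
`μ`, let `δ_μ` be the Hochschild coboundary taken with respect to the product `μ`. In any
nonassociative ring, `a(b,c,d) - (ab,c,d) + (a,bc,d) - (a,b,cd) + (a,b,c)d = 0` for the associator
`(x,y,z)`; comparing the coefficients of `h^n` gives `∑_{p+q=n} δ_{α_p} D_q = 0`. If `D_q = 0` for
`q ≤ k`, then for `n = k + 1` only `δ_{α₀} D_{k+1} = 0` survives. Isolating the terms of `D_{k+1}`
that contain `α₀` gives `D_{k+1} = E_{k+1} - δ_{α₀} α_{k+1}`, so `δ_{α₀} E_{k+1} = 0` because
`δ_{α₀}² = 0`.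
-/

open Finset

section AntidiagonalSums

variable {N M : Type*} [AddCommMonoid N] [HasAntidiagonal N] [AddCommMonoid M]

theorem sum_antidiagonal_antidiagonal_rotate (n : N) (f : N → N → N → M) :
    ∑ p ∈ antidiagonal n, ∑ q ∈ antidiagonal p.2, f p.1 q.1 q.2 =
      ∑ p ∈ antidiagonal n, ∑ q ∈ antidiagonal p.2, f q.1 q.2 p.1 := by
  simp only [sum_sigma']
  apply sum_nbij' (fun ⟨⟨i, _⟩, ⟨r, s⟩⟩ ↦ ⟨(s, i + r), (i, r)⟩)
    (fun ⟨⟨s, _⟩, ⟨i, r⟩⟩ ↦ ⟨(i, r + s), (r, s)⟩)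
  all_goals
    rintro ⟨⟨i, j⟩, ⟨r, s⟩⟩ h
    obtain ⟨rfl, rfl⟩ : i + j = n ∧ r + s = j := by simpa using h
    simp [add_comm, add_left_comm]

theorem sum_antidiagonal_antidiagonal_reverse (n : N) (f : N → N → N → M) :
    ∑ p ∈ antidiagonal n, ∑ q ∈ antidiagonal p.2, f p.1 q.1 q.2 =
      ∑ p ∈ antidiagonal n, ∑ q ∈ antidiagonal p.2, f q.2 q.1 p.1 := by
  rw [sum_antidiagonal_antidiagonal_rotate]
  refine sum_congr rfl fun p _ ↦ ?_
  exact sum_equiv (Equiv.prodComm N N) (by simp [add_comm]) (by simp)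

end AntidiagonalSums

namespace FormalDeformation

variable {K M : Type*} [CommSemiring K] [AddCommGroup M] [Module K M]

section HochschildCoboundary

/-- The Hochschild coboundary `δf` of a `2`-cochain `f`, taken with respect to the product `μ`.
Cochains are encoded as plain functions, with no linearity built in. -/
def hochschildCoboundary₂ (μ : M →ₗ[K] M →ₗ[K] M) (f : M → M → M) (a b c : M) : M :=
  μ a (f b c) - f (μ a b) c + f a (μ b c) - μ (f a b) c

/-- The Hochschild coboundary `δf` of a `3`-cochain `f`, taken with respect to the product `μ`.
Cochains are encoded as plain functions, with no linearity built in. -/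
def hochschildCoboundary₃ (μ : M →ₗ[K] M →ₗ[K] M) (f : M → M → M → M) (a b c d : M) : M :=
  μ a (f b c d) - f (μ a b) c d + f a (μ b c) d - f a b (μ c d) + μ (f a b c) d

theorem hochschildCoboundary₃_zero (μ : M →ₗ[K] M →ₗ[K] M) :
    hochschildCoboundary₃ μ 0 = 0 := by
  ext
  simp [hochschildCoboundary₃]

theorem hochschildCoboundary₃_add (μ : M →ₗ[K] M →ₗ[K] M) (f g : M → M → M → M) :
    hochschildCoboundary₃ μ (f + g) = hochschildCoboundary₃ μ f + hochschildCoboundary₃ μ g := by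
  ext
  simp only [hochschildCoboundary₃, Pi.add_apply, map_add, LinearMap.add_apply]
  abel

theorem hochschildCoboundary₃_hochschildCoboundary₂ {μ : M →ₗ[K] M →ₗ[K] M}
    (μ_assoc : ∀ a b c, μ (μ a b) c = μ a (μ b c)) (f : M → M → M) :
    hochschildCoboundary₃ μ (hochschildCoboundary₂ μ f) = 0 := by
  ext
  simp only [hochschildCoboundary₃, hochschildCoboundary₂, map_add, map_sub, LinearMap.add_apply,
    LinearMap.sub_apply, μ_assoc, Pi.zero_apply]
  abel

end HochschildCoboundary

section AssociatorCoeff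

variable (α : ℕ → M →ₗ[K] M →ₗ[K] M)

/-- The coefficient `D_n` of `h ^ n` in the associator `(x * y) * z - x * (y * z)` of the formal
product `x * y = ∑ h ^ r α_r(x, y)`. It includes the terms with the undeformed product `α 0`. -/
def associatorCoeff (n : ℕ) (x y z : M) : M :=
  ∑ q ∈ antidiagonal n, (α q.1 (α q.2 x y) z - α q.1 x (α q.2 y z))

/-- The obstruction `E_{k+1}`: the part of `associatorCoeff α (k + 1)` without the undeformed
product `α 0`. This is `Esum` for bilinear maps on a module, where `α 0` plays the role of the
multiplication. -/
def obstruction (k : ℕ) (x y z : M) : M :=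
  ∑ s ∈ Icc 1 k, (α (k + 1 - s) (α s x y) z - α (k + 1 - s) x (α s y z))

theorem associatorCoeff_eq_sum_range (n : ℕ) (x y z : M) :
    associatorCoeff α n x y z =
      ∑ s ∈ range (n + 1), (α (n - s) (α s x y) z - α (n - s) x (α s y z)) := by
  rw [associatorCoeff, ← Nat.sum_antidiagonal_swap, Nat.sum_antidiagonal_eq_sum_range_succ_mk]
  rfl

theorem associatorCoeff_zero (x y z : M) :
    associatorCoeff α 0 x y z = α 0 (α 0 x y) z - α 0 x (α 0 y z) := by
  simp [associatorCoeff]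

theorem sum_hochschildCoboundary₃_associatorCoeff (n : ℕ) (a b c d : M) :
    ∑ p ∈ antidiagonal n, hochschildCoboundary₃ (α p.1) (associatorCoeff α p.2) a b c d = 0 := by
  simp only [hochschildCoboundary₃, associatorCoeff, map_sum, map_sub, LinearMap.sum_apply,
    LinearMap.sub_apply, sum_add_distrib, sum_sub_distrib]
  -- Each of the five bracketings of `a b c d` occurs twice, with opposite signs.
  rw [sum_antidiagonal_antidiagonal_rotate n fun i r s ↦ α i a (α r (α s b c) d),
    sum_antidiagonal_antidiagonal_rotate n fun i r s ↦ α i a (α r b (α s c d)),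
    sum_antidiagonal_antidiagonal_rotate n fun i r s ↦ α i (α r (α s a b) c) d,
    sum_antidiagonal_antidiagonal_rotate n fun i r s ↦ α i (α r a (α s b c)) d,
    sum_antidiagonal_antidiagonal_reverse n fun i r s ↦ α r (α i a b) (α s c d)]
  abel

theorem obstruction_eq_associatorCoeff_add_hochschildCoboundary₂ (k : ℕ) :
    obstruction α k =
      associatorCoeff α (k + 1) + hochschildCoboundary₂ (α 0) fun x y ↦ α (k + 1) x y := by
  ext x y z
  rw [Pi.add_apply, Pi.add_apply, Pi.add_apply, associatorCoeff_eq_sum_range, sum_range_succ,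
    range_eq_Ico, sum_eq_sum_Ico_succ_bot k.succ_pos, zero_add, Nat.succ_eq_add_one,
    Ico_add_one_right_eq_Icc, obstruction, hochschildCoboundary₂, Nat.sub_zero, Nat.sub_self]
  abel

variable {α}

theorem hochschildCoboundary₃_associatorCoeff_succ {k : ℕ}
    (hD : ∀ i ≤ k, associatorCoeff α i = 0) :
    hochschildCoboundary₃ (α 0) (associatorCoeff α (k + 1)) = 0 := by
  ext a b c d
  have graded_cocycle := sum_hochschildCoboundary₃_associatorCoeff α (k + 1) a b c d
  have lower_terms : ∑ p ∈ antidiagonal k,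
      hochschildCoboundary₃ (α (p.1 + 1)) (associatorCoeff α p.2) a b c d = 0 :=
    sum_eq_zero fun p hp ↦ by
      rw [hD p.2 (HasAntidiagonal.antidiagonal.snd_le hp), hochschildCoboundary₃_zero]
      rfl
  rwa [Nat.sum_antidiagonal_succ, lower_terms, add_zero] at graded_cocycle

end AssociatorCoeff

end FormalDeformation

open FormalDeformation

theorem obstruction_is_hochschild_three_cocycle_general
    {K M : Type*} [CommSemiring K] [AddCommGroup M] [Module K M]
    (α : ℕ → M →ₗ[K] M →ₗ[K] M) (k : ℕ) (hD : ∀ i ≤ k, associatorCoeff α i = 0) :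
    hochschildCoboundary₃ (α 0) (obstruction α k) = 0 := by
  have α₀_assoc (a b c : M) : α 0 (α 0 a b) c = α 0 a (α 0 b c) := by
    rw [← sub_eq_zero, ← associatorCoeff_zero, hD 0 k.zero_le]
    rfl
  rw [obstruction_eq_associatorCoeff_add_hochschildCoboundary₂, hochschildCoboundary₃_add,
    hochschildCoboundary₃_associatorCoeff_succ hD,
    hochschildCoboundary₃_hochschildCoboundary₂ α₀_assoc, add_zero]

/-- If the associativity obstructions `D_i` vanish for `1 ≤ i ≤ k`, then
`E_{k+1}` is a Hochschild 3-cocycle. -/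
theorem obstruction_is_hochschild_three_cocycle
    {K A : Type*} [CommRing K] [Ring A] [Algebra K A]
    (α : ℕ → A →ₗ[K] A →ₗ[K] A)
    (hα0 : ∀ a b : A, α 0 a b = a * b)
    (k : ℕ)
    (hD : ∀ i, 1 ≤ i → i ≤ k → ∀ a₁ a₂ a₃ : A,
      ∑ s ∈ Finset.range (i + 1),
        (α (i - s) (α s a₁ a₂) a₃ - α (i - s) a₁ (α s a₂ a₃)) = 0) :
    ∀ a₀ a₁ a₂ a₃ : A,
      a₀ * Esum α k a₁ a₂ a₃ - Esum α k (a₀ * a₁) a₂ a₃ + Esum α k a₀ (a₁ * a₂) a₃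
        - Esum α k a₀ a₁ (a₂ * a₃) + Esum α k a₀ a₁ a₂ * a₃ = 0 := by
  have associatorCoeff_eq_zero : ∀ i ≤ k, associatorCoeff α i = 0 := by
    rintro (_ | i) hi <;> ext x y z
    · simp [associatorCoeff_zero, hα0, mul_assoc]
    · exact (associatorCoeff_eq_sum_range α (i + 1) x y z).trans (hD _ i.succ_pos hi x y z)
  have Esum_cocycle : hochschildCoboundary₃ (α 0) (Esum α k) = 0 :=
    obstruction_is_hochschild_three_cocycle_general α k associatorCoeff_eq_zero
  intro a₀ a₁ a₂ a₃
  simpa only [hochschildCoboundary₃, hα0, Pi.zero_apply] using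
    congr_fun (congr_fun₃ Esum_cocycle a₀ a₁ a₂) a₃
end

section
/- Let K be a commutative ring containing the rationals (a ℚ-algebra), A an associative K-algebra, and u, v two commuting K-linear derivations of A (u∘v = v∘u). Then the exponential deformation a*b = exp(h u⌣v)(a,b) = a·b + Σ_{r≥1} (h^r/r!) u^r(a)·v^r(b) is an associative formal deformation of A: the bilinear maps α_r(a,b) = (1/r!) u^r(a)·v^r(b) satisfy D_k(a₁,a₂,a₃) = Σ_{s+r=k, s,r≥0} [α_r(α_s(a₁,a₂),a₃) − α_r(a₁,α_s(a₂,a₃))] = 0 for every k ≥ 1. -/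
/-- The terms `α_r(a,b) = (1/r!)·u^r(a)·v^r(b)` of the exponential deformation
`exp(h u⌣v)` built from two derivations `u`, `v`. -/
noncomputable def alphaExp {K A : Type*} [CommRing K] [Algebra ℚ K] [Ring A] [Algebra K A]
    (u v : Module.End K A) (r : ℕ) (a b : A) : A :=
  algebraMap ℚ K ((r.factorial : ℚ)⁻¹) • ((u ^ r) a * (v ^ r) b)

/-!
On `A ⊗ A ⊗ A` let `X₁₂`, `X₁₃`, `X₂₃` apply `u` and `v` to the two indicated factors. They commute
because `u` and `v` do. The Leibniz rule lets `u` and `v` pass through the inner product of an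
iterated deformed product, which turns `(a * b) * c` into the product of the factors of
`exp (h (X₁₃ + X₂₃)) (exp (h X₁₂) (a ⊗ b ⊗ c))`, and `a * (b * c)` into that of
`exp (h (X₁₂ + X₁₃)) (exp (h X₂₃) (a ⊗ b ⊗ c))`. Both operators equal
`exp (h (X₁₂ + X₁₃ + X₂₃))`, which in degree `k` is the binomial theorem for the divided powers
`X ^ k / k!`.
-/

open TensorProduct Finset

section DividedPowers

variable (K : Type*) [CommSemiring K] [Algebra ℚ K]

/-- The divided power `xⁿ / n!` in a `K`-algebra over a `ℚ`-algebra `K`, that is, the coefficient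
of `hⁿ` in `exp (h x)`. The scalar `1 / n!` is taken through `K`, as in `alphaExp`. -/
noncomputable def divPow {R : Type*} [Semiring R] [Algebra K R] (x : R) (n : ℕ) : R :=
  algebraMap ℚ K (n.factorial : ℚ)⁻¹ • x ^ n

theorem algebraMap_inv_factorial_add_mul_choose (i j : ℕ) :
    algebraMap ℚ K ((i + j).factorial : ℚ)⁻¹ * ((i + j).choose i : K) =
      algebraMap ℚ K (i.factorial : ℚ)⁻¹ * algebraMap ℚ K (j.factorial : ℚ)⁻¹ := by
  rw [← map_natCast (algebraMap ℚ K), ← map_mul, ← map_mul, Nat.cast_add_choose]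
  field_simp

theorem divPow_add_of_commute {R : Type*} [Semiring R] [Algebra K R] {x y : R} (hxy : Commute x y)
    (n : ℕ) :
    divPow K (x + y) n = ∑ p ∈ antidiagonal n, divPow K x p.1 * divPow K y p.2 := by
  simp only [divPow, hxy.add_pow', smul_sum]
  refine sum_congr rfl fun ⟨i, j⟩ hij ↦ ?_
  obtain rfl : i + j = n := mem_antidiagonal.1 hij
  rw [smul_mul_smul_comm, ← algebraMap_inv_factorial_add_mul_choose, mul_smul,
    Nat.cast_smul_eq_nsmul]

variable {K} {M N : Type*} [AddCommMonoid M] [Module K M] [AddCommMonoid N] [Module K N]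

theorem divPow_apply_of_semiconj {f : Module.End K N} {g : Module.End K M} {φ : M →ₗ[K] N}
    (hfg : f ∘ₗ φ = φ ∘ₗ g) (n : ℕ) (x : M) : divPow K f n (φ x) = φ (divPow K g n x) := by
  have hpow : (f ^ n) (φ x) = φ ((g ^ n) x) :=
    congr($(Module.End.commute_pow_left_of_commute hfg n) x)
  simp only [divPow, LinearMap.smul_apply, map_smul, hpow]

end DividedPowers

section Legs

variable {K M : Type*} [CommSemiring K] [AddCommMonoid M] [Module K M]

/-- The operator `X₁₂` on `M ⊗ M ⊗ M`: `f` on the first factor and `g` on the second. -/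
noncomputable def leg₁₂ (f g : Module.End K M) : Module.End K ((M ⊗[K] M) ⊗[K] M) :=
  map (map f g) 1

/-- The operator `X₁₃` on `M ⊗ M ⊗ M`: `f` on the first factor and `g` on the third. -/
noncomputable def leg₁₃ (f g : Module.End K M) : Module.End K ((M ⊗[K] M) ⊗[K] M) :=
  map (map f 1) g

/-- The operator `X₂₃` on `M ⊗ M ⊗ M`: `f` on the second factor and `g` on the third. -/
noncomputable def leg₂₃ (f g : Module.End K M) : Module.End K ((M ⊗[K] M) ⊗[K] M) :=
  map (map 1 f) g

variable (f g : Module.End K M)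

theorem commute_leg₁₂_leg₁₃ : Commute (leg₁₂ f g) (leg₁₃ f g) := by
  simp only [Commute, SemiconjBy, leg₁₂, leg₁₃, ← TensorProduct.map_mul, one_mul, mul_one]

theorem commute_leg₁₃_leg₂₃ : Commute (leg₁₃ f g) (leg₂₃ f g) := by
  simp only [Commute, SemiconjBy, leg₁₃, leg₂₃, ← TensorProduct.map_mul, one_mul, mul_one]

variable {f g}

theorem commute_leg₁₂_leg₂₃ (hfg : Commute f g) : Commute (leg₁₂ f g) (leg₂₃ f g) := by
  simp only [Commute, SemiconjBy, leg₁₂, leg₂₃, ← TensorProduct.map_mul, one_mul, mul_one, hfg.eq]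

end Legs

section PartialProducts

variable (K A : Type*) [CommSemiring K] [Semiring A] [Algebra K A]

/-- The map `(a ⊗ b) ⊗ c ↦ ab ⊗ c`. -/
noncomputable def mulFirstTwo : (A ⊗[K] A) ⊗[K] A →ₗ[K] A ⊗[K] A :=
  (LinearMap.mul' K A).rTensor A

/-- The map `(a ⊗ b) ⊗ c ↦ a ⊗ bc`. The source is bracketed as for `mulFirstTwo`, so that the
operators `leg₁₂`, `leg₁₃` and `leg₂₃` act on the source of both maps. -/
noncomputable def mulLastTwo : (A ⊗[K] A) ⊗[K] A →ₗ[K] A ⊗[K] A :=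
  (LinearMap.mul' K A).lTensor A ∘ₗ (TensorProduct.assoc K A A A).toLinearMap

theorem mul'_comp_mulFirstTwo_eq_mul'_comp_mulLastTwo :
    LinearMap.mul' K A ∘ₗ mulFirstTwo K A = LinearMap.mul' K A ∘ₗ mulLastTwo K A := by
  ext a b c
  simp [mulFirstTwo, mulLastTwo, mul_assoc]

variable {K A} {u v : Module.End K A}

theorem map_comp_mulFirstTwo (hu : ∀ a b : A, u (a * b) = u a * b + a * u b) :
    map u v ∘ₗ mulFirstTwo K A = mulFirstTwo K A ∘ₗ (leg₁₃ u v + leg₂₃ u v) := by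
  ext a b c
  simp [mulFirstTwo, leg₁₃, leg₂₃, hu, add_tmul]

theorem map_comp_mulLastTwo (hv : ∀ a b : A, v (a * b) = v a * b + a * v b) :
    map u v ∘ₗ mulLastTwo K A = mulLastTwo K A ∘ₗ (leg₁₂ u v + leg₁₃ u v) := by
  ext a b c
  simp [mulLastTwo, leg₁₂, leg₁₃, hv, tmul_add]

end PartialProducts

section ExponentialDeformation

variable {K A : Type*} [CommRing K] [Algebra ℚ K] [Ring A] [Algebra K A] (u v : Module.End K A)

theorem alphaExp_eq_mul'_divPow (r : ℕ) (a b : A) :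
    alphaExp u v r a b = LinearMap.mul' K A (divPow K (map u v) r (a ⊗ₜ b)) := by
  simp [alphaExp, divPow, TensorProduct.map_pow]

theorem alphaExp_tmul (s : ℕ) (a b c : A) :
    alphaExp u v s a b ⊗ₜ[K] c = mulFirstTwo K A (divPow K (leg₁₂ u v) s ((a ⊗ₜ b) ⊗ₜ c)) := by
  simp [alphaExp, divPow, leg₁₂, mulFirstTwo, TensorProduct.map_pow, smul_tmul']

theorem tmul_alphaExp (s : ℕ) (a b c : A) :
    a ⊗ₜ[K] alphaExp u v s b c = mulLastTwo K A (divPow K (leg₂₃ u v) s ((a ⊗ₜ b) ⊗ₜ c)) := by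
  simp [alphaExp, divPow, leg₂₃, mulLastTwo, TensorProduct.map_pow]

variable {u v}

theorem alphaExp_alphaExp_left (hu : ∀ a b : A, u (a * b) = u a * b + a * u b)
    (r s : ℕ) (a b c : A) :
    alphaExp u v r (alphaExp u v s a b) c =
      LinearMap.mul' K A (mulFirstTwo K A
        (divPow K (leg₁₃ u v + leg₂₃ u v) r (divPow K (leg₁₂ u v) s ((a ⊗ₜ b) ⊗ₜ c)))) := by
  rw [alphaExp_eq_mul'_divPow, alphaExp_tmul, divPow_apply_of_semiconj (map_comp_mulFirstTwo hu)]

theorem alphaExp_alphaExp_right (hv : ∀ a b : A, v (a * b) = v a * b + a * v b)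
    (r s : ℕ) (a b c : A) :
    alphaExp u v r a (alphaExp u v s b c) =
      LinearMap.mul' K A (mulLastTwo K A
        (divPow K (leg₁₂ u v + leg₁₃ u v) r (divPow K (leg₂₃ u v) s ((a ⊗ₜ b) ⊗ₜ c)))) := by
  rw [alphaExp_eq_mul'_divPow, tmul_alphaExp, divPow_apply_of_semiconj (map_comp_mulLastTwo hv)]

theorem sum_alphaExp_alphaExp_left (hu : ∀ a b : A, u (a * b) = u a * b + a * u b)
    (huv : Commute u v) (k : ℕ) (a b c : A) :
    ∑ p ∈ antidiagonal k, alphaExp u v p.1 (alphaExp u v p.2 a b) c =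
      LinearMap.mul' K A (mulFirstTwo K A
        (divPow K (leg₁₂ u v + leg₁₃ u v + leg₂₃ u v) k ((a ⊗ₜ b) ⊗ₜ c))) := by
  have hcomm : Commute (leg₁₃ u v + leg₂₃ u v) (leg₁₂ u v) :=
    ((commute_leg₁₂_leg₁₃ u v).add_right (commute_leg₁₂_leg₂₃ huv)).symm
  rw [add_assoc, add_comm, divPow_add_of_commute K hcomm]
  simp only [alphaExp_alphaExp_left hu, LinearMap.sum_apply, map_sum, Module.End.mul_apply]

theorem sum_alphaExp_alphaExp_right (hv : ∀ a b : A, v (a * b) = v a * b + a * v b)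
    (huv : Commute u v) (k : ℕ) (a b c : A) :
    ∑ p ∈ antidiagonal k, alphaExp u v p.1 a (alphaExp u v p.2 b c) =
      LinearMap.mul' K A (mulLastTwo K A
        (divPow K (leg₁₂ u v + leg₁₃ u v + leg₂₃ u v) k ((a ⊗ₜ b) ⊗ₜ c))) := by
  have hcomm : Commute (leg₁₂ u v + leg₁₃ u v) (leg₂₃ u v) :=
    (commute_leg₁₂_leg₂₃ huv).add_left (commute_leg₁₃_leg₂₃ u v)
  rw [divPow_add_of_commute K hcomm]
  simp only [alphaExp_alphaExp_right hv, LinearMap.sum_apply, map_sum, Module.End.mul_apply]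

theorem sum_alphaExp_alphaExp_left_eq_right (hu : ∀ a b : A, u (a * b) = u a * b + a * u b)
    (hv : ∀ a b : A, v (a * b) = v a * b + a * v b) (huv : Commute u v) (k : ℕ) (a b c : A) :
    ∑ p ∈ antidiagonal k, alphaExp u v p.1 (alphaExp u v p.2 a b) c =
      ∑ p ∈ antidiagonal k, alphaExp u v p.1 a (alphaExp u v p.2 b c) := by
  rw [sum_alphaExp_alphaExp_left hu huv, sum_alphaExp_alphaExp_right hv huv]
  exact congr($(mul'_comp_mulFirstTwo_eq_mul'_comp_mulLastTwo K A) _)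

end ExponentialDeformation

/-- for a commutative ring `K` containing the rationals and two commuting
`K`-linear derivations `u`, `v` of an associative `K`-algebra `A`, the exponential
deformation `a*b = Σ_r (h^r/r!) u^r(a)·v^r(b)` is an associative formal deformation:
all the obstructions `D_k` vanish. -/
theorem exp_deformation_associative
    {K A : Type*} [CommRing K] [Algebra ℚ K] [Ring A] [Algebra K A]
    (u v : Module.End K A)
    (hu : ∀ a b : A, u (a * b) = u a * b + a * u b)
    (hv : ∀ a b : A, v (a * b) = v a * b + a * v b)
    (huv : ∀ a : A, u (v a) = v (u a)) :
    ∀ k, 1 ≤ k → ∀ a₁ a₂ a₃ : A,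
      ∑ s ∈ Finset.range (k + 1),
        (alphaExp u v (k - s) (alphaExp u v s a₁ a₂) a₃
          - alphaExp u v (k - s) a₁ (alphaExp u v s a₂ a₃)) = 0 := by
  intro k _ a₁ a₂ a₃
  rw [← Nat.sum_antidiagonal_eq_sum_range_succ (fun s r ↦
      alphaExp u v r (alphaExp u v s a₁ a₂) a₃ - alphaExp u v r a₁ (alphaExp u v s a₂ a₃)),
    ← Nat.sum_antidiagonal_swap, sum_sub_distrib, sub_eq_zero]
  exact sum_alphaExp_alphaExp_left_eq_right hu hv (LinearMap.ext huv) k a₁ a₂ a₃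
end

section
/- (Weyl/Moyal product.) Let K be a commutative ring containing the rationals, A a commutative associative K-algebra, d₁,…,d_N pairwise commuting K-linear derivations of A, and (ε^{αβ})_{1≤α,β≤N} an antisymmetric matrix with entries in K. Then the bilinear maps α_k(a,b) = (1/k!) Σ_{α₁,β₁,…,α_k,β_k=1}^{N} ε^{α₁β₁}···ε^{α_kβ_k} (d_{α₁}∘···∘d_{α_k})(a) · (d_{β₁}∘···∘d_{β_k})(b) (with α₀(a,b) = a·b) define an associative formal deformation of A: D_k(a₁,a₂,a₃) = Σ_{s+r=k, s,r≥0} [α_r(α_s(a₁,a₂),a₃) − α_r(a₁,α_s(a₂,a₃))] = 0 for every k ≥ 1. -/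
/-- The terms of the Weyl/Moyal deformation:
`α_k(a,b) = (1/k!) Σ ε^{α₁β₁}···ε^{α_kβ_k} (d_{α₁}∘···∘d_{α_k})(a)·(d_{β₁}∘···∘d_{β_k})(b)`. -/
noncomputable def alphaMoyal {K A : Type*} [CommRing K] [Algebra ℚ K]
    [CommRing A] [Algebra K A] {N : ℕ}
    (d : Fin N → Module.End K A) (ε : Fin N → Fin N → K) (k : ℕ) (a b : A) : A :=
  algebraMap ℚ K ((k.factorial : ℚ)⁻¹) •
    ∑ f : Fin k → Fin N, ∑ g : Fin k → Fin N,
      (∏ i : Fin k, ε (f i) (g i)) •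
        ((List.ofFn fun i => d (f i)).prod a * (List.ofFn fun i => d (g i)).prod b)

/-!
Write `μ : A ⊗ A → A` for the multiplication and `B = ∑ ε^{αβ} d_α ⊗ d_β` on `A ⊗ A`, so that
`α_k = μ ∘ B^k / k!`. On `A ⊗ A ⊗ A` let `B₀₁`, `B₀₂`, `B₁₂` be `B` acting on two of the three
factors. The Leibniz rule says `B ∘ (μ ⊗ 1) = (μ ⊗ 1) ∘ (B₀₂ + B₁₂)` and
`B ∘ (1 ⊗ μ) = (1 ⊗ μ) ∘ (B₀₁ + B₀₂)`. The three operators commute because the `d_α` do, so by the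
binomial theorem both `∑ α_r(α_s(a, b), c)` and `∑ α_r(a, α_s(b, c))` over `r + s = k` are
`(B₀₁ + B₀₂ + B₁₂)^k / k!` applied to `a ⊗ b ⊗ c`, followed by multiplication.
-/

open TensorProduct

section DividedPower

variable (K : Type*) [CommSemiring K] [Algebra ℚ K]

/-- The divided power `x ^ k / k!` in a `K`-algebra, where `K` contains the rationals. -/
noncomputable def dividedPower {R : Type*} [Semiring R] [Algebra K R] (x : R) (k : ℕ) : R :=
  algebraMap ℚ K (k.factorial : ℚ)⁻¹ • x ^ k

theorem dividedPower_add_of_commute {R : Type*} [Semiring R] [Algebra K R] {x y : R}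
    (hxy : Commute x y) (k : ℕ) :
    dividedPower K (x + y) k =
      ∑ s ∈ Finset.range (k + 1), dividedPower K x (k - s) * dividedPower K y s := by
  rw [dividedPower, add_comm, hxy.symm.add_pow, Finset.smul_sum]
  refine Finset.sum_congr rfl fun s hs => ?_
  have hsk : s ≤ k := Finset.mem_range_succ_iff.mp hs
  have hcoeff : (k.factorial : ℚ)⁻¹ * (k.choose s : ℚ) =
      ((k - s).factorial : ℚ)⁻¹ * (s.factorial : ℚ)⁻¹ := by
    have := k.factorial_ne_zero
    rw [Nat.cast_choose ℚ hsk]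
    field_simp
  rw [dividedPower, dividedPower, smul_mul_smul_comm, ← map_mul, ← hcoeff, map_mul, map_natCast,
    mul_smul, Nat.cast_smul_eq_nsmul, nsmul_eq_mul', (hxy.symm.pow_pow s (k - s)).eq]

variable {K}

theorem dividedPower_comp_of_comp_eq {M M' : Type*} [AddCommMonoid M] [Module K M]
    [AddCommMonoid M'] [Module K M'] {f : M →ₗ[K] M'} {x : Module.End K M} {y : Module.End K M'}
    (h : y ∘ₗ f = f ∘ₗ x) (k : ℕ) :
    dividedPower K y k ∘ₗ f = f ∘ₗ dividedPower K x k := by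
  rw [dividedPower, dividedPower, LinearMap.smul_comp, LinearMap.comp_smul,
    Module.End.commute_pow_left_of_commute h]

end DividedPower

section ListProd

variable {R : Type*} [Semiring R]

theorem sum_pow_eq_sum_prod_ofFn {ι : Type*} [Fintype ι] (x : ι → R) (k : ℕ) :
    (∑ i, x i) ^ k = ∑ f : Fin k → ι, (List.ofFn fun i => x (f i)).prod := by
  induction k with
  | zero => simp
  | succ k ih =>
    rw [pow_succ', ih, Finset.sum_mul_sum, ← (Fin.consEquiv fun _ => ι).sum_comp,
      Fintype.sum_prod_type]
    simp [Fin.consEquiv, List.ofFn_succ]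

theorem prod_ofFn_smul_mul {K : Type*} [CommSemiring K] [Algebra K R] {k : ℕ} (c : Fin k → K)
    {x y : Fin k → R} (hxy : ∀ i j, Commute (x i) (y j)) :
    (List.ofFn fun i => c i • (x i * y i)).prod =
      (∏ i, c i) • ((List.ofFn x).prod * (List.ofFn y).prod) := by
  induction k with
  | zero => simp
  | succ k ih =>
    have hswap : Commute (y 0) (List.ofFn fun i : Fin k => x i.succ).prod := by
      refine Commute.list_prod_right _ _ fun z hz => ?_
      obtain ⟨i, rfl⟩ := List.mem_ofFn.mp hz
      exact (hxy i.succ 0).symm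
    rw [List.ofFn_succ, List.prod_cons, ih _ fun i j => hxy i.succ j.succ, smul_mul_smul_comm,
      hswap.mul_mul_mul_comm, Fin.prod_univ_succ, List.ofFn_succ (f := x),
      List.ofFn_succ (f := y), List.prod_cons, List.prod_cons]

end ListProd

section Contraction

variable {K R ι : Type*} [CommSemiring K] [Semiring R] [Algebra K R] [Fintype ι]

/-- The contraction `∑ ε^{ij} x_i y_j` of two families in a `K`-algebra with a matrix `ε`. Every
bidifferential operator in the proof is of this form. -/
def contraction (ε : ι → ι → K) (x y : ι → R) : R :=
  ∑ i, ∑ j, ε i j • (x i * y j)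

theorem contraction_add_left (ε : ι → ι → K) (x x' y : ι → R) :
    contraction ε (x + x') y = contraction ε x y + contraction ε x' y := by
  simp only [contraction, Pi.add_apply, add_mul, smul_add, Finset.sum_add_distrib]

theorem contraction_add_right (ε : ι → ι → K) (x y y' : ι → R) :
    contraction ε x (y + y') = contraction ε x y + contraction ε x y' := by
  simp only [contraction, Pi.add_apply, mul_add, smul_add, Finset.sum_add_distrib]

theorem commute_contraction_right {ε : ι → ι → K} {z : R} {x y : ι → R}
    (hx : ∀ i, Commute z (x i)) (hy : ∀ i, Commute z (y i)) :
    Commute z (contraction ε x y) :=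
  Commute.sum_right _ _ _ fun i _ => Commute.sum_right _ _ _ fun j _ =>
    ((hx i).mul_right (hy j)).smul_right _

theorem commute_contraction {ε ε' : ι → ι → K} {x y z w : ι → R}
    (hxz : ∀ i j, Commute (x i) (z j)) (hxw : ∀ i j, Commute (x i) (w j))
    (hyz : ∀ i j, Commute (y i) (z j)) (hyw : ∀ i j, Commute (y i) (w j)) :
    Commute (contraction ε x y) (contraction ε' z w) :=
  (commute_contraction_right
    (fun i => (commute_contraction_right (hxz i) (hxw i)).symm)
    (fun i => (commute_contraction_right (hyz i) (hyw i)).symm)).symm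

theorem contraction_pow (ε : ι → ι → K) {x y : ι → R} (hxy : ∀ i j, Commute (x i) (y j)) (k : ℕ) :
    contraction ε x y ^ k = ∑ f : Fin k → ι, ∑ g : Fin k → ι, (∏ i, ε (f i) (g i)) •
      ((List.ofFn fun i => x (f i)).prod * (List.ofFn fun i => y (g i)).prod) := by
  rw [contraction, ← Fintype.sum_prod_type', sum_pow_eq_sum_prod_ofFn,
    ← (Equiv.arrowProdEquivProdArrow (Fin k) (fun _ => ι) fun _ => ι).symm.sum_comp,
    Fintype.sum_prod_type]
  exact Finset.sum_congr rfl fun f _ => Finset.sum_congr rfl fun g _ =>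
    prod_ofFn_smul_mul _ fun i j => hxy (f i) (g j)

theorem contraction_comp_of_comp_eq {M M' : Type*} [AddCommMonoid M] [Module K M]
    [AddCommMonoid M'] [Module K M'] (ε : ι → ι → K) {f : M →ₗ[K] M'} {x y : ι → Module.End K M}
    {x' y' : ι → Module.End K M'} (hx : ∀ i, x' i ∘ₗ f = f ∘ₗ x i)
    (hy : ∀ i, y' i ∘ₗ f = f ∘ₗ y i) :
    contraction ε x' y' ∘ₗ f = f ∘ₗ contraction ε x y := by
  have hmul (i j : ι) (m : M) : x' i (y' j (f m)) = f (x i (y j m)) := by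
    rw [show y' j (f m) = f (y j m) from LinearMap.congr_fun (hy j) m]
    exact LinearMap.congr_fun (hx i) _
  ext m
  simp only [contraction, LinearMap.comp_apply, LinearMap.sum_apply, LinearMap.smul_apply,
    Module.End.mul_apply, map_sum, map_smul, hmul]

end Contraction

section TensorListProd

variable {K M : Type*} [CommSemiring K] [AddCommMonoid M] [Module K M]
  (N : Type*) [AddCommMonoid N] [Module K N]

theorem prod_map_rTensor (l : List (Module.End K M)) :
    (l.map (LinearMap.rTensor N)).prod = l.prod.rTensor N := by
  induction l with
  | nil => exact (LinearMap.rTensor_id N M).symm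
  | cons u l ih => rw [List.map_cons, List.prod_cons, ih, List.prod_cons, LinearMap.rTensor_mul]

theorem prod_map_lTensor (l : List (Module.End K M)) :
    (l.map (LinearMap.lTensor N)).prod = l.prod.lTensor N := by
  induction l with
  | nil => exact (LinearMap.lTensor_id N M).symm
  | cons u l ih => rw [List.map_cons, List.prod_cons, ih, List.prod_cons, LinearMap.lTensor_mul]

end TensorListProd

section Slots

variable {K M ι : Type*} [CommSemiring K] [AddCommMonoid M] [Module K M] [Fintype ι]

/-- The operator `u` acting on the tensor factor number `p` of `M ⊗ M ⊗ M`, the factors being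
numbered from `0`. -/
def slot : Fin 3 → Module.End K M → Module.End K ((M ⊗[K] M) ⊗[K] M)
  | 0, u => (u.rTensor M).rTensor M
  | 1, u => (u.lTensor M).rTensor M
  | 2, u => u.lTensor (M ⊗[K] M)

theorem commute_slot {u v : Module.End K M} (huv : Commute u v) (p q : Fin 3) :
    Commute (slot p u) (slot q v) := by
  have huv_apply (m : M) : u (v m) = v (u m) := LinearMap.congr_fun huv.eq m
  refine TensorProduct.ext_threefold fun a b c => ?_
  fin_cases p <;> fin_cases q <;> simp [slot, huv_apply]

/-- The operator `B = ∑ ε^{ij} d_i ⊗ d_j` on `M ⊗ M`, whose divided powers give the Moyal terms. -/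
def bidiffOp (d : ι → Module.End K M) (ε : ι → ι → K) : Module.End K (M ⊗[K] M) :=
  contraction ε (fun i => (d i).rTensor M) (fun i => (d i).lTensor M)

/-- The operator `B_{pq}` on `M ⊗ M ⊗ M`: `∑ ε^{ij} d_i ⊗ d_j` acting on the factors `p` and `q`. -/
def bidiffOpSlots (d : ι → Module.End K M) (ε : ι → ι → K) (p q : Fin 3) :
    Module.End K ((M ⊗[K] M) ⊗[K] M) :=
  contraction ε (fun i => slot p (d i)) (fun i => slot q (d i))

variable {d : ι → Module.End K M}

theorem commute_bidiffOpSlots (hcomm : ∀ i j, Commute (d i) (d j)) (ε : ι → ι → K)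
    (p q p' q' : Fin 3) : Commute (bidiffOpSlots d ε p q) (bidiffOpSlots d ε p' q') :=
  commute_contraction (fun i j => commute_slot (hcomm i j) p p')
    (fun i j => commute_slot (hcomm i j) p q') (fun i j => commute_slot (hcomm i j) q p')
    (fun i j => commute_slot (hcomm i j) q q')

variable (d)

theorem bidiffOpSlots_zero_one_comp_mk_flip (ε : ι → ι → K) (c : M) :
    bidiffOpSlots d ε 0 1 ∘ₗ (TensorProduct.mk K (M ⊗[K] M) M).flip c =
      (TensorProduct.mk K (M ⊗[K] M) M).flip c ∘ₗ bidiffOp d ε :=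
  contraction_comp_of_comp_eq ε (fun _ => rfl) (fun _ => rfl)

theorem bidiffOpSlots_one_two_comp_assoc_symm_mk (ε : ι → ι → K) (a : M) :
    bidiffOpSlots d ε 1 2 ∘ₗ
        (TensorProduct.assoc K M M M).symm ∘ₗ TensorProduct.mk K M (M ⊗[K] M) a =
      ((TensorProduct.assoc K M M M).symm ∘ₗ TensorProduct.mk K M (M ⊗[K] M) a) ∘ₗ bidiffOp d ε :=
  contraction_comp_of_comp_eq ε (fun _ => TensorProduct.ext' fun _ _ => rfl)
    (fun _ => TensorProduct.ext' fun _ _ => rfl)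

theorem bidiffOp_pow_tmul (ε : ι → ι → K) (k : ℕ) (a b : M) :
    (bidiffOp d ε ^ k) (a ⊗ₜ b) = ∑ f : Fin k → ι, ∑ g : Fin k → ι, (∏ i, ε (f i) (g i)) •
      ((List.ofFn fun i => d (f i)).prod a ⊗ₜ[K] (List.ofFn fun i => d (g i)).prod b) := by
  have hlegs (i j : ι) : Commute ((d i).rTensor M) ((d j).lTensor M) :=
    TensorProduct.ext' fun _ _ => rfl
  have hleft (f : Fin k → ι) : (List.ofFn fun i => (d (f i)).rTensor M).prod =
      (List.ofFn fun i => d (f i)).prod.rTensor M := by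
    rw [← prod_map_rTensor, List.map_ofFn, Function.comp_def]
  have hright (g : Fin k → ι) : (List.ofFn fun i => (d (g i)).lTensor M).prod =
      (List.ofFn fun i => d (g i)).prod.lTensor M := by
    rw [← prod_map_lTensor, List.map_ofFn, Function.comp_def]
  simp only [bidiffOp, contraction_pow ε hlegs, hleft, hright, LinearMap.sum_apply,
    LinearMap.smul_apply, Module.End.mul_apply, LinearMap.lTensor_tmul, LinearMap.rTensor_tmul]

end Slots

section Moyal

variable {K A ι : Type*} [CommSemiring K] [NonUnitalSemiring A] [Module K A]
  [SMulCommClass K A A] [IsScalarTower K A A] [Fintype ι] {d : ι → Module.End K A}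

variable (K A) in
/-- The threefold multiplication `a ⊗ b ⊗ c ↦ (a * b) * c`, through which both bracketings of an
iterated Moyal term factor. -/
def mulThree : (A ⊗[K] A) ⊗[K] A →ₗ[K] A :=
  LinearMap.mul' K A ∘ₗ (LinearMap.mul' K A).rTensor A

theorem mul'_comp_lTensor_mul'_comp_assoc :
    LinearMap.mul' K A ∘ₗ (LinearMap.mul' K A).lTensor A ∘ₗ (TensorProduct.assoc K A A A) =
      mulThree K A :=
  TensorProduct.ext_threefold fun a b c => (mul_assoc a b c).symm

theorem bidiffOp_comp_mul'_rTensor (hd : ∀ i a b, d i (a * b) = d i a * b + a * d i b)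
    (ε : ι → ι → K) :
    bidiffOp d ε ∘ₗ (LinearMap.mul' K A).rTensor A =
      (LinearMap.mul' K A).rTensor A ∘ₗ (bidiffOpSlots d ε 0 2 + bidiffOpSlots d ε 1 2) := by
  rw [bidiffOpSlots, bidiffOpSlots, ← contraction_add_left]
  refine contraction_comp_of_comp_eq ε (fun i => ?_) (fun i => ?_) <;>
  · refine TensorProduct.ext_threefold fun a b c => ?_
    simp [slot, hd, add_tmul]

theorem bidiffOp_comp_mul'_lTensor (hd : ∀ i a b, d i (a * b) = d i a * b + a * d i b)
    (ε : ι → ι → K) :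
    bidiffOp d ε ∘ₗ (LinearMap.mul' K A).lTensor A ∘ₗ (TensorProduct.assoc K A A A) =
      ((LinearMap.mul' K A).lTensor A ∘ₗ (TensorProduct.assoc K A A A)) ∘ₗ
        (bidiffOpSlots d ε 0 1 + bidiffOpSlots d ε 0 2) := by
  rw [bidiffOpSlots, bidiffOpSlots, ← contraction_add_right]
  refine contraction_comp_of_comp_eq ε (fun i => ?_) (fun i => ?_) <;>
  · refine TensorProduct.ext_threefold fun a b c => ?_
    simp [slot, hd, tmul_add]

variable [Algebra ℚ K]

/-- The `k`-th term `μ ∘ B^k / k!` of the Moyal product, as a linear map on `A ⊗ A`. -/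
noncomputable def moyalTerm (d : ι → Module.End K A) (ε : ι → ι → K) (k : ℕ) : A ⊗[K] A →ₗ[K] A :=
  LinearMap.mul' K A ∘ₗ dividedPower K (bidiffOp d ε) k

theorem moyalTerm_moyalTerm_tmul (hd : ∀ i a b, d i (a * b) = d i a * b + a * d i b)
    (ε : ι → ι → K) (r s : ℕ) (a b c : A) :
    moyalTerm d ε r (moyalTerm d ε s (a ⊗ₜ b) ⊗ₜ c) =
      mulThree K A ((dividedPower K (bidiffOpSlots d ε 0 2 + bidiffOpSlots d ε 1 2) r *
        dividedPower K (bidiffOpSlots d ε 0 1) s) (a ⊗ₜ b ⊗ₜ c)) := by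
  have houter (t : (A ⊗[K] A) ⊗[K] A) := LinearMap.congr_fun
    (dividedPower_comp_of_comp_eq (bidiffOp_comp_mul'_rTensor hd ε) r) t
  have hinner : dividedPower K (bidiffOp d ε) s (a ⊗ₜ b) ⊗ₜ c =
      dividedPower K (bidiffOpSlots d ε 0 1) s (a ⊗ₜ b ⊗ₜ c) :=
    (LinearMap.congr_fun
      (dividedPower_comp_of_comp_eq (bidiffOpSlots_zero_one_comp_mk_flip d ε c) s)
      (a ⊗ₜ b)).symm
  calc moyalTerm d ε r (moyalTerm d ε s (a ⊗ₜ b) ⊗ₜ c)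
    _ = LinearMap.mul' K A (dividedPower K (bidiffOp d ε) r ((LinearMap.mul' K A).rTensor A
          (dividedPower K (bidiffOp d ε) s (a ⊗ₜ b) ⊗ₜ c))) := rfl
    _ = mulThree K A (dividedPower K (bidiffOpSlots d ε 0 2 + bidiffOpSlots d ε 1 2) r
          (dividedPower K (bidiffOp d ε) s (a ⊗ₜ b) ⊗ₜ c)) :=
        congrArg (LinearMap.mul' K A) (houter _)
    _ = _ := by rw [hinner, Module.End.mul_apply]

theorem moyalTerm_tmul_moyalTerm (hd : ∀ i a b, d i (a * b) = d i a * b + a * d i b)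
    (ε : ι → ι → K) (r s : ℕ) (a b c : A) :
    moyalTerm d ε r (a ⊗ₜ moyalTerm d ε s (b ⊗ₜ c)) =
      mulThree K A ((dividedPower K (bidiffOpSlots d ε 0 1 + bidiffOpSlots d ε 0 2) r *
        dividedPower K (bidiffOpSlots d ε 1 2) s) (a ⊗ₜ b ⊗ₜ c)) := by
  have houter (t : (A ⊗[K] A) ⊗[K] A) := LinearMap.congr_fun
    (dividedPower_comp_of_comp_eq (bidiffOp_comp_mul'_lTensor hd ε) r) t
  let assoc := TensorProduct.assoc K A A A
  let t := assoc.symm (a ⊗ₜ dividedPower K (bidiffOp d ε) s (b ⊗ₜ c))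
  have hinner : t = dividedPower K (bidiffOpSlots d ε 1 2) s (a ⊗ₜ b ⊗ₜ c) :=
    (LinearMap.congr_fun
      (dividedPower_comp_of_comp_eq (bidiffOpSlots_one_two_comp_assoc_symm_mk d ε a) s)
      (b ⊗ₜ c)).symm
  calc moyalTerm d ε r (a ⊗ₜ moyalTerm d ε s (b ⊗ₜ c))
    _ = LinearMap.mul' K A (dividedPower K (bidiffOp d ε) r
          ((LinearMap.mul' K A).lTensor A (assoc t))) := by
        rw [LinearEquiv.apply_symm_apply]; rfl
    _ = LinearMap.mul' K A ((LinearMap.mul' K A).lTensor A (assoc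
          (dividedPower K (bidiffOpSlots d ε 0 1 + bidiffOpSlots d ε 0 2) r t))) :=
        congrArg (LinearMap.mul' K A) (houter t)
    _ = mulThree K A (dividedPower K (bidiffOpSlots d ε 0 1 + bidiffOpSlots d ε 0 2) r t) :=
        LinearMap.congr_fun mul'_comp_lTensor_mul'_comp_assoc _
    _ = _ := by rw [hinner, Module.End.mul_apply]

theorem moyal_product_associative_general
    (hd : ∀ i a b, d i (a * b) = d i a * b + a * d i b) (hcomm : ∀ i j, Commute (d i) (d j))
    (ε : ι → ι → K) (k : ℕ) (a b c : A) :
    ∑ s ∈ Finset.range (k + 1), moyalTerm d ε (k - s) (moyalTerm d ε s (a ⊗ₜ b) ⊗ₜ c) =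
      ∑ s ∈ Finset.range (k + 1), moyalTerm d ε (k - s) (a ⊗ₜ moyalTerm d ε s (b ⊗ₜ c)) := by
  have hB := commute_bidiffOpSlots hcomm ε
  simp only [moyalTerm_moyalTerm_tmul hd, moyalTerm_tmul_moyalTerm hd, ← map_sum,
    ← LinearMap.sum_apply]
  rw [← dividedPower_add_of_commute K ((hB 0 2 0 1).add_left (hB 1 2 0 1)),
    ← dividedPower_add_of_commute K ((hB 0 1 1 2).add_left (hB 0 2 1 2)),
    add_comm _ (bidiffOpSlots d ε 0 1), add_assoc]

end Moyal

theorem alphaMoyal_eq_moyalTerm {K A : Type*} [CommRing K] [Algebra ℚ K] [CommRing A]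
    [Algebra K A] {N : ℕ} (d : Fin N → Module.End K A) (ε : Fin N → Fin N → K) (k : ℕ) (a b : A) :
    alphaMoyal d ε k a b = moyalTerm d ε k (a ⊗ₜ b) := by
  simp only [alphaMoyal, moyalTerm, dividedPower, LinearMap.comp_apply, LinearMap.smul_apply,
    bidiffOp_pow_tmul, map_smul, map_sum, LinearMap.mul'_apply]

/-- Weyl/Moyal product: for pairwise commuting derivations `d₁,…,d_N`
of a commutative algebra `A` and an antisymmetric matrix `(ε^{αβ})` with entries in a
ℚ-algebra `K`, the Moyal terms `α_k` define an associative formal deformation of `A`: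
all the obstructions `D_k` vanish. -/
theorem moyal_product_associative
    {K A : Type*} [CommRing K] [Algebra ℚ K] [CommRing A] [Algebra K A] {N : ℕ}
    (d : Fin N → Module.End K A)
    (hd : ∀ i, ∀ a b : A, d i (a * b) = d i a * b + a * d i b)
    (hcomm : ∀ i j, ∀ a : A, d i (d j a) = d j (d i a))
    (ε : Fin N → Fin N → K)
    (hε : ∀ i j, ε i j = - ε j i) :
    ∀ k, 1 ≤ k → ∀ a₁ a₂ a₃ : A,
      ∑ s ∈ Finset.range (k + 1),
        (alphaMoyal d ε (k - s) (alphaMoyal d ε s a₁ a₂) a₃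
          - alphaMoyal d ε (k - s) a₁ (alphaMoyal d ε s a₂ a₃)) = 0 := by
  intro k _ a₁ a₂ a₃
  simp only [alphaMoyal_eq_moyalTerm, Finset.sum_sub_distrib, sub_eq_zero]
  exact moyal_product_associative_general hd (fun i j => LinearMap.ext (hcomm i j)) ε k a₁ a₂ a₃
end

section
/- The skew-symmetric part of the infinitesimal of an associative deformation of a commutative algebra is a Poisson bracket: let A be a commutative associative K-algebra and (α_r) an associative formal deformation of A. Define β(a,b) = α₁(a,b) − α₁(b,a). Then β is skew-symmetric, satisfies the Leibniz rule β(a, b·c) = β(a,b)·c + b·β(a,c) for all a,b,c ∈ A, and satisfies the Jacobi identity β(β(a,b),c) + β(β(b,c),a) + β(β(c,a),b) = 0 for all a,b,c ∈ A. -/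
/-- The skew-symmetric part `β(a,b) = α₁(a,b) − α₁(b,a)` of the infinitesimal of a
formal deformation `(α_r)`. -/
def skewPart {K A : Type*} [CommRing K] [Ring A] [Algebra K A]
    (α : ℕ → A →ₗ[K] A →ₗ[K] A) (a b : A) : A :=
  α 1 a b - α 1 b a

/-!
At order `h` associativity says that `α₁` is a Hochschild 2-cocycle, and for a commutative algebra
the failure of the Leibniz rule for the skew part of any 2-cochain is a combination of values of its
coboundary. At order `h²` associativity says that the associator of `α₁` is the coboundary of `α₂`.
Alternating this over the six permutations of the arguments turns the associator into the Jacobiator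
of `β`, whereas the alternation of a coboundary vanishes because the product is commutative.
-/

section Bilinear

variable {K M : Type*} [CommSemiring K] [AddCommGroup M] [Module K M]

/-- The antisymmetrization `f(a,b) - f(b,a)` of a bilinear map, without a factor `1/2` so that it
makes sense over any `K`. -/
def skewSymmetrization (f : M →ₗ[K] M →ₗ[K] M) : M →ₗ[K] M →ₗ[K] M :=
  f - f.flip

/-- The associator of a bilinear product `f` on a module. -/
def bilinearAssociator (f : M →ₗ[K] M →ₗ[K] M) (a b c : M) : M :=
  f (f a b) c - f a (f b c)

/-- The signed sum of a ternary operation over all permutations of its arguments. -/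
def alternatingSum (t : M → M → M → M) (a b c : M) : M :=
  t a b c + t b c a + t c a b - t b a c - t a c b - t c b a

/-- The coefficient of `h^k` in `(a * b) * c - a * (b * c)`, where `*` is the product
`∑ h^r α_r`. -/
def deformationAssociator (α : ℕ → M →ₗ[K] M →ₗ[K] M) (k : ℕ) (a b c : M) : M :=
  ∑ s ∈ Finset.range (k + 1), (α (k - s) (α s a b) c - α (k - s) a (α s b c))

theorem skewSymmetrization_apply (f : M →ₗ[K] M →ₗ[K] M) (a b : M) :
    skewSymmetrization f a b = f a b - f b a :=
  rfl

theorem skewSymmetrization_swap (f : M →ₗ[K] M →ₗ[K] M) (a b : M) :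
    skewSymmetrization f a b = -skewSymmetrization f b a := by
  simp only [skewSymmetrization_apply, neg_sub]

theorem jacobiator_skewSymmetrization (f : M →ₗ[K] M →ₗ[K] M) (a b c : M) :
    skewSymmetrization f (skewSymmetrization f a b) c
        + skewSymmetrization f (skewSymmetrization f b c) a
        + skewSymmetrization f (skewSymmetrization f c a) b
      = alternatingSum (bilinearAssociator f) a b c := by
  simp only [skewSymmetrization_apply, alternatingSum, bilinearAssociator, map_sub,
    LinearMap.sub_apply]
  abel

end Bilinear

section Commutative

variable {K A : Type*} [CommSemiring K] [NonUnitalNonAssocCommRing A] [Module K A]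

/-- The Hochschild coboundary of a 2-cochain `f` of `A` with values in `A`. -/
def hochschildCoboundary (f : A →ₗ[K] A →ₗ[K] A) (a b c : A) : A :=
  a * f b c - f (a * b) c + f a (b * c) - f a b * c

theorem skewSymmetrization_mul_sub_leibniz (f : A →ₗ[K] A →ₗ[K] A) (a b c : A) :
    skewSymmetrization f a (b * c)
        - (skewSymmetrization f a b * c + b * skewSymmetrization f a c)
      = hochschildCoboundary f a b c - hochschildCoboundary f b a c
        + hochschildCoboundary f b c a := by
  simp only [skewSymmetrization_apply, hochschildCoboundary, mul_sub, mul_comm]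
  abel

theorem skewSymmetrization_mul {f : A →ₗ[K] A →ₗ[K] A}
    (hf : ∀ a b c, hochschildCoboundary f a b c = 0) (a b c : A) :
    skewSymmetrization f a (b * c)
      = skewSymmetrization f a b * c + b * skewSymmetrization f a c := by
  rw [← sub_eq_zero, skewSymmetrization_mul_sub_leibniz, hf, hf, hf, sub_zero, add_zero]

theorem alternatingSum_hochschildCoboundary (f : A →ₗ[K] A →ₗ[K] A) (a b c : A) :
    alternatingSum (hochschildCoboundary f) a b c = 0 := by
  simp only [alternatingSum, hochschildCoboundary, mul_comm]
  abel

theorem skewSymmetrization_jacobi {f g : A →ₗ[K] A →ₗ[K] A}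
    (hfg : bilinearAssociator f = hochschildCoboundary g) (a b c : A) :
    skewSymmetrization f (skewSymmetrization f a b) c
        + skewSymmetrization f (skewSymmetrization f b c) a
        + skewSymmetrization f (skewSymmetrization f c a) b = 0 := by
  rw [jacobiator_skewSymmetrization, hfg, alternatingSum_hochschildCoboundary]

variable {α : ℕ → A →ₗ[K] A →ₗ[K] A}

theorem deformationAssociator_one (hα0 : ∀ a b, α 0 a b = a * b) (a b c : A) :
    deformationAssociator α 1 a b c = -hochschildCoboundary (α 1) a b c := by
  simp only [deformationAssociator, hochschildCoboundary, Finset.sum_range_succ,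
    Finset.sum_range_zero, Nat.sub_zero, Nat.sub_self, hα0]
  abel

theorem deformationAssociator_two (hα0 : ∀ a b, α 0 a b = a * b) (a b c : A) :
    deformationAssociator α 2 a b c
      = bilinearAssociator (α 1) a b c - hochschildCoboundary (α 2) a b c := by
  simp only [deformationAssociator, bilinearAssociator, hochschildCoboundary,
    Finset.sum_range_succ, Finset.sum_range_zero, Nat.sub_zero, Nat.sub_self, Nat.reduceSub, hα0]
  abel

theorem skew_infinitesimal_is_poisson_bracket_general (hα0 : ∀ a b, α 0 a b = a * b)
    (hassoc_one : ∀ a b c, deformationAssociator α 1 a b c = 0)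
    (hassoc_two : ∀ a b c, deformationAssociator α 2 a b c = 0) :
    (∀ a b, skewSymmetrization (α 1) a b = -skewSymmetrization (α 1) b a) ∧
    (∀ a b c, skewSymmetrization (α 1) a (b * c)
      = skewSymmetrization (α 1) a b * c + b * skewSymmetrization (α 1) a c) ∧
    (∀ a b c,
      skewSymmetrization (α 1) (skewSymmetrization (α 1) a b) c
        + skewSymmetrization (α 1) (skewSymmetrization (α 1) b c) a
        + skewSymmetrization (α 1) (skewSymmetrization (α 1) c a) b = 0) := by
  have cocycle (a b c : A) : hochschildCoboundary (α 1) a b c = 0 := by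
    rw [← neg_eq_zero, ← deformationAssociator_one hα0, hassoc_one]
  have associator_eq : bilinearAssociator (α 1) = hochschildCoboundary (α 2) := by
    funext a b c
    rw [← sub_eq_zero, ← deformationAssociator_two hα0, hassoc_two]
  exact ⟨skewSymmetrization_swap (α 1), skewSymmetrization_mul cocycle,
    skewSymmetrization_jacobi associator_eq⟩

end Commutative

/-- the skew-symmetric part of the infinitesimal of an associative
formal deformation of a commutative algebra is a Poisson bracket: it is
skew-symmetric, satisfies the Leibniz rule and the Jacobi identity. -/
theorem skew_infinitesimal_is_poisson_bracket
    {K A : Type*} [CommRing K] [CommRing A] [Algebra K A]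
    (α : ℕ → A →ₗ[K] A →ₗ[K] A)
    (hα0 : ∀ a b : A, α 0 a b = a * b)
    (hassoc : ∀ k, 1 ≤ k → ∀ a₁ a₂ a₃ : A,
      ∑ s ∈ Finset.range (k + 1),
        (α (k - s) (α s a₁ a₂) a₃ - α (k - s) a₁ (α s a₂ a₃)) = 0) :
    (∀ a b : A, skewPart α a b = - skewPart α b a) ∧
    (∀ a b c : A, skewPart α a (b * c) = skewPart α a b * c + b * skewPart α a c) ∧
    (∀ a b c : A,
      skewPart α (skewPart α a b) c + skewPart α (skewPart α b c) a
        + skewPart α (skewPart α c a) b = 0) :=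
  skew_infinitesimal_is_poisson_bracket_general hα0 (hassoc 1 le_rfl) (hassoc 2 one_le_two)
end

section
/- The Gerstenhaber bracket on multilinear maps satisfies the graded Jacobi identity: let A be a K-module and let f : A^m → A, g : A^n → A, k : A^p → A be K-multilinear maps, with shifted degrees |f| = m−1, |g| = n−1, |k| = p−1. Then (−1)^{|f||k|}[f,[g,k]_G]_G + (−1)^{|g||f|}[g,[k,f]_G]_G + (−1)^{|k||g|}[k,[f,g]_G]_G = 0 as multilinear maps A^{m+n+p−2} → A. -/
/-- Reindex an `a`-ary operation along an equality of arities. -/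
def recast {A : Type*} {a b : ℕ} (h : a = b) (F : (Fin a → A) → A) :
    (Fin b → A) → A :=
  fun v => F (fun j => v (Fin.cast h j))

/-- The Gerstenhaber composition product of an `(m+1)`-ary and an `(n+1)`-ary
operation (shifted degrees `m` and `n`):
`(f∘g)(a₁,…,a_{m+n+1}) = Σ_i (−1)^{(i−1)·n} f(a₁,…,a_{i−1},g(a_i,…),…)`. -/
def gcomp {A : Type*} [AddCommGroup A] {m n : ℕ}
    (f : (Fin (m + 1) → A) → A) (g : (Fin (n + 1) → A) → A) :
    (Fin (m + n + 1) → A) → A :=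
  fun a => ∑ i : Fin (m + 1), (-1 : ℤ) ^ ((i : ℕ) * n) •
    f (fun j : Fin (m + 1) =>
      if (j : ℕ) < (i : ℕ) then a ⟨(j : ℕ), by have := j.isLt; omega⟩
      else if (j : ℕ) = (i : ℕ) then
        g (fun l : Fin (n + 1) =>
          a ⟨(i : ℕ) + (l : ℕ), by have hi := i.isLt; have hl := l.isLt; omega⟩)
      else a ⟨(j : ℕ) + n, by have := j.isLt; omega⟩)

/-- The Gerstenhaber bracket `[f,g]_G = f∘g − (−1)^{mn} g∘f` of operations of
shifted degrees `m` and `n`. -/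
def gbracket {A : Type*} [AddCommGroup A] {m n : ℕ}
    (f : (Fin (m + 1) → A) → A) (g : (Fin (n + 1) → A) → A) :
    (Fin (m + n + 1) → A) → A :=
  fun a => gcomp f g a
    - (-1 : ℤ) ^ (m * n) • recast (show n + m + 1 = m + n + 1 by omega) (gcomp g f) a

/-!
Finitary operations are viewed as operations on sequences `ℕ → A` that read only finitely many
entries, so that no arity has to be transported along an equality. Expanding `(F ∘ G) ∘ H`, the
terms that graft `H` into `G` make up `F ∘ (G ∘ H)`; in the remaining terms `G` and `H` sit in
distinct slots of `F`, and their signed sum is symmetric under exchanging `G` and `H` up to the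
Koszul sign. Hence the composition product is graded pre-Lie, and the graded commutator of a graded
pre-Lie product satisfies the graded Jacobi identity.
-/

open Finset

theorem sum_range_eq_before_add_block_add_after {M : Type*} [AddCommMonoid M] {i m : ℕ}
    (hi : i ≤ m) (n : ℕ) (u : ℕ → M) :
    ∑ l ∈ range (m + n + 1), u l =
      ∑ l ∈ range i, u l + ∑ j ∈ range (n + 1), u (i + j) +
        ∑ j ∈ Ico (i + 1) (m + 1), u (j + n) := by
  rw [← sum_range_add, sum_Ico_add', add_right_comm i 1 n, ← add_assoc i n 1,
    sum_range_add_sum_Ico _ (by omega), add_right_comm m 1 n]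

/-- An operation on sequences. An operation of arity `N` is encoded as one that reads only the
entries with index `< N`; its shifted degree `N - 1` is passed separately to the constructions
below. -/
abbrev SeqOp (A : Type*) := (ℕ → A) → A

namespace SeqOp

section PartialComposition

variable {A : Type*}

/-- The operation on sequences that applies an `N`-ary operation to the first `N` entries. -/
def ofFin {N : ℕ} (f : (Fin N → A) → A) : SeqOp A := fun a => f fun j => a j

/-- The sequence `a` with the block `a i, …, a (i + n)` replaced by the single entry `x`. -/
def replaceBlock (i n : ℕ) (x : A) (a : ℕ → A) : ℕ → A :=
  fun j => if j < i then a j else if j = i then x else a (j + n)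

/-- The partial composition `F ∘ᵢ G` grafting `G`, of shifted degree `n`, into slot `i` of `F`;
slots are numbered from `0`. -/
def partialComp (i n : ℕ) (F G : SeqOp A) : SeqOp A :=
  fun a => F (replaceBlock i n (G fun l => a (i + l)) a)

theorem dependsOn_ofFin {n : ℕ} (f : (Fin (n + 1) → A) → A) :
    DependsOn (ofFin f) (Set.Iic n) :=
  fun _ _ h => congrArg f <| funext fun j => h j (Nat.lt_succ_iff.mp j.isLt)

theorem replaceBlock_eq_update (i n : ℕ) (x y : A) (a : ℕ → A) :
    replaceBlock i n x a = Function.update (replaceBlock i n y a) i x := by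
  funext j
  simp only [replaceBlock, Function.update_apply]
  grind

theorem partialComp_partialComp_nested {i j n : ℕ} (hj : j ≤ n) (p : ℕ) (F G H : SeqOp A) :
    partialComp (i + j) p (partialComp i n F G) H =
      partialComp i (n + p) F (partialComp j p G H) := by
  funext a
  have block_after_shift (x : A) :
      (fun l => replaceBlock (i + j) p x a (i + l)) = replaceBlock j p x fun l => a (i + l) := by
    funext l
    simp only [replaceBlock]
    grind
  have nested_blocks (x y : A) :
      replaceBlock i n y (replaceBlock (i + j) p x a) = replaceBlock i (n + p) y a := by
    funext l
    simp only [replaceBlock]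
    grind
  simp only [partialComp, block_after_shift, nested_blocks, add_assoc]

theorem partialComp_partialComp_parallel {i j n : ℕ} (hij : i < j) (p : ℕ) (F : SeqOp A)
    {G : SeqOp A} (hG : DependsOn G (Set.Iic n)) (H : SeqOp A) :
    partialComp (j + n) p (partialComp i n F G) H =
      partialComp i n (partialComp j p F H) G := by
  funext a
  have input_of_G (x : A) :
      G (fun l => replaceBlock (j + n) p x a (i + l)) = G fun l => a (i + l) := by
    refine hG fun l (hl : l ≤ n) => ?_
    simp only [replaceBlock]
    grind
  have input_of_H (y : A) :
      (fun l => replaceBlock i n y a (j + l)) = fun l => a (j + n + l) := by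
    funext l
    simp only [replaceBlock]
    grind
  have disjoint_blocks (x y : A) :
      replaceBlock i n y (replaceBlock (j + n) p x a) =
        replaceBlock j p x (replaceBlock i n y a) := by
    funext l
    simp only [replaceBlock]
    grind
  simp only [partialComp, input_of_G, input_of_H, disjoint_blocks]

end PartialComposition

section Composition

variable {A : Type*} [AddCommGroup A] {m n p : ℕ} {F G H : SeqOp A}

/-- Additivity in each of the slots `0, …, m`. -/
def IsMultiadditive (m : ℕ) (F : SeqOp A) : Prop :=
  ∀ i ≤ m, ∀ (a : ℕ → A) (x y : A),
    F (Function.update a i (x + y)) = F (Function.update a i x) + F (Function.update a i y)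

/-- The Gerstenhaber composition product of operations of shifted degrees `m` and `n`; agrees with
`gcomp` by `ofFin_gcomp`. -/
def comp (m n : ℕ) (F G : SeqOp A) : SeqOp A :=
  ∑ i ∈ range (m + 1), (-1 : ℤ) ^ (i * n) • partialComp i n F G

/-- The Gerstenhaber bracket of operations of shifted degrees `m` and `n`; agrees with `gbracket`
by `ofFin_gbracket`. -/
def bracket (m n : ℕ) (F G : SeqOp A) : SeqOp A :=
  comp m n F G - (-1 : ℤ) ^ (m * n) • comp n m G F

/-- The associator `(F ∘ G) ∘ H - F ∘ (G ∘ H)` of operations of shifted degrees `m`, `n`, `p`. -/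
def associator (m n p : ℕ) (F G H : SeqOp A) : SeqOp A :=
  comp (m + n) p (comp m n F G) H - comp m (n + p) F (comp n p G H)

/-- The terms of `(F ∘ G) ∘ H` in which `H` is grafted into a slot of `F` to the left of `G`. -/
def graftLeftOf (m n p : ℕ) (F G H : SeqOp A) : SeqOp A :=
  ∑ i ∈ range (m + 1), ∑ l ∈ range i,
    (-1 : ℤ) ^ (i * n + l * p) • partialComp l p (partialComp i n F G) H

theorem isMultiadditive_ofFin {K : Type*} [Semiring K] [Module K A]
    (f : MultilinearMap K (fun _ : Fin (m + 1) => A) A) : IsMultiadditive m (ofFin f) := by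
  intro i hi a x y
  have restrict_update (z : A) : (fun j : Fin (m + 1) => Function.update a i z j) =
      Function.update (fun j : Fin (m + 1) => a j) ⟨i, Nat.lt_succ_of_le hi⟩ z := by
    funext j
    simp only [Function.update_apply, Fin.ext_iff]
  simp only [ofFin, restrict_update, f.map_update_add]

theorem ofFin_gcomp (f : (Fin (m + 1) → A) → A) (g : (Fin (n + 1) → A) → A) :
    ofFin (gcomp f g) = comp m n (ofFin f) (ofFin g) := by
  funext a
  simp only [comp, Finset.sum_apply, sum_range]
  rfl

theorem ofFin_gbracket (f : (Fin (m + 1) → A) → A) (g : (Fin (n + 1) → A) → A) :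
    ofFin (gbracket f g) = bracket m n (ofFin f) (ofFin g) := by
  rw [bracket, ← ofFin_gcomp, ← ofFin_gcomp]
  rfl

theorem IsMultiadditive.map_replaceBlock_add (hF : IsMultiadditive m F) {i : ℕ} (hi : i ≤ m)
    (n : ℕ) (x y : A) (a : ℕ → A) :
    F (replaceBlock i n (x + y) a) = F (replaceBlock i n x a) + F (replaceBlock i n y a) := by
  simpa only [← replaceBlock_eq_update] using hF i hi (replaceBlock i n 0 a) x y

/-- Grafting into slot `i` of a multiadditive `F`, as a homomorphism in the grafted operation. -/
def partialCompLeftHom (hF : IsMultiadditive m F) {i : ℕ} (hi : i ≤ m) (n : ℕ) :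
    SeqOp A →+ SeqOp A :=
  AddMonoidHom.mk' (partialComp i n F) fun _ _ =>
    funext fun a => hF.map_replaceBlock_add hi n _ _ a

/-- The composition product `F ∘ -` with a multiadditive `F`, as a homomorphism. -/
def compLeftHom (hF : IsMultiadditive m F) (n : ℕ) : SeqOp A →+ SeqOp A :=
  AddMonoidHom.mk' (comp m n F) fun G G' => by
    simp only [comp, ← sum_add_distrib, ← smul_add]
    refine sum_congr rfl fun i hi => congrArg _ ?_
    exact map_add (partialCompLeftHom hF (mem_range_succ_iff.mp hi) n) G G'

/-- The composition product `- ∘ G`, as a homomorphism. -/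
def compRightHom (m n : ℕ) (G : SeqOp A) : SeqOp A →+ SeqOp A :=
  AddMonoidHom.mk' (fun F => comp m n F G) fun _ _ => by
    simp only [comp, ← sum_add_distrib, ← smul_add]
    rfl

theorem comp_bracket (hF : IsMultiadditive m F) (q n p : ℕ) (G H : SeqOp A) :
    comp m q F (bracket n p G H) =
      comp m q F (comp n p G H) - (-1 : ℤ) ^ (n * p) • comp m q F (comp p n H G) :=
  (map_sub (compLeftHom hF q) _ _).trans <| congrArg _ <| map_zsmul (compLeftHom hF q) _ _

theorem bracket_comp (q m n p : ℕ) (F G H : SeqOp A) :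
    comp q m (bracket n p G H) F =
      comp q m (comp n p G H) F - (-1 : ℤ) ^ (n * p) • comp q m (comp p n H G) F :=
  (map_sub (compRightHom q m F) _ _).trans <| congrArg _ <| map_zsmul (compRightHom q m F) _ _

theorem comp_comp_left (q m n p : ℕ) (F G H : SeqOp A) :
    comp q p (comp m n F G) H = ∑ i ∈ range (m + 1), ∑ l ∈ range (q + 1),
      (-1 : ℤ) ^ (i * n + l * p) • partialComp l p (partialComp i n F G) H := by
  have expand := map_sum (compRightHom q p H)
    (fun i => (-1 : ℤ) ^ (i * n) • partialComp i n F G) (range (m + 1))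
  simp only [map_zsmul] at expand
  refine expand.trans <| sum_congr rfl fun i _ => ?_
  simp only [pow_add, mul_smul, ← smul_sum]
  rfl

theorem comp_comp_right (hF : IsMultiadditive m F) (q n p : ℕ) (G H : SeqOp A) :
    comp m q F (comp n p G H) = ∑ i ∈ range (m + 1), ∑ j ∈ range (n + 1),
      (-1 : ℤ) ^ (i * q + j * p) • partialComp i q F (partialComp j p G H) := by
  refine sum_congr rfl fun i hi => ?_
  have expand := map_sum (partialCompLeftHom hF (mem_range_succ_iff.mp hi) q)
    (fun j => (-1 : ℤ) ^ (j * p) • partialComp j p G H) (range (n + 1))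
  simp only [map_zsmul] at expand
  simp only [pow_add _ (i * q), mul_smul, ← smul_sum]
  exact congrArg _ expand

theorem sum_graft_right_eq_smul_graftLeftOf (m p : ℕ) (F : SeqOp A)
    (hG : DependsOn G (Set.Iic n)) (H : SeqOp A) :
    ∑ i ∈ range (m + 1), ∑ j ∈ Ico (i + 1) (m + 1),
        (-1 : ℤ) ^ (i * n + (j + n) * p) • partialComp (j + n) p (partialComp i n F G) H =
      (-1 : ℤ) ^ (n * p) • graftLeftOf m p n F H G := by
  rw [graftLeftOf, smul_sum, sum_comm' (t' := range (m + 1)) (s' := fun j => range j)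
    (by simp only [mem_range, mem_Ico]; omega)]
  refine sum_congr rfl fun j _ => ?_
  rw [smul_sum]
  refine sum_congr rfl fun i hi => ?_
  rw [partialComp_partialComp_parallel (mem_range.mp hi) p F hG, smul_smul, ← pow_add]
  congr 2
  ring

theorem associator_eq_graftLeftOf_add (hF : IsMultiadditive m F)
    (hG : DependsOn G (Set.Iic n)) (p : ℕ) (H : SeqOp A) :
    associator m n p F G H =
      graftLeftOf m n p F G H + (-1 : ℤ) ^ (n * p) • graftLeftOf m p n F H G := by
  have split_slots : comp (m + n) p (comp m n F G) H =
      graftLeftOf m n p F G H + comp m (n + p) F (comp n p G H) +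
        (-1 : ℤ) ^ (n * p) • graftLeftOf m p n F H G := by
    rw [comp_comp_left, comp_comp_right hF, graftLeftOf,
      ← sum_graft_right_eq_smul_graftLeftOf m p F hG H, ← sum_add_distrib, ← sum_add_distrib]
    refine sum_congr rfl fun i hi => ?_
    rw [sum_range_eq_before_add_block_add_after (mem_range_succ_iff.mp hi)]
    congr 2
    refine sum_congr rfl fun j hj => ?_
    rw [partialComp_partialComp_nested (mem_range_succ_iff.mp hj)]
    congr 2
    ring
  rw [associator, split_slots]
  abel

theorem associator_graded_right_symm (hF : IsMultiadditive m F) (hG : DependsOn G (Set.Iic n))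
    (hH : DependsOn H (Set.Iic p)) :
    associator m n p F G H = (-1 : ℤ) ^ (n * p) • associator m p n F H G := by
  rw [associator_eq_graftLeftOf_add hF hG, associator_eq_graftLeftOf_add hF hH, smul_add,
    smul_smul, mul_comm p n, ← pow_add, Even.neg_one_pow ⟨_, rfl⟩, one_smul, add_comm]

theorem bracket_bracket (hF : IsMultiadditive m F) (n p : ℕ) (G H : SeqOp A) :
    bracket m (n + p) F (bracket n p G H) =
      comp m (n + p) F (comp n p G H) - (-1 : ℤ) ^ (n * p) • comp m (n + p) F (comp p n H G) -
        ((-1 : ℤ) ^ (m * n) * (-1 : ℤ) ^ (p * m)) •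
          (comp (n + p) m (comp n p G H) F -
            (-1 : ℤ) ^ (n * p) • comp (p + n) m (comp p n H G) F) := by
  rw [bracket, comp_bracket hF, bracket_comp, mul_add, pow_add, mul_comm m p, add_comm p n]

theorem bracket_graded_jacobi
    (hF : IsMultiadditive m F) (hG : IsMultiadditive n G) (hH : IsMultiadditive p H)
    (dF : DependsOn F (Set.Iic m)) (dG : DependsOn G (Set.Iic n))
    (dH : DependsOn H (Set.Iic p)) :
    (-1 : ℤ) ^ (m * p) • bracket m (n + p) F (bracket n p G H) +
      (-1 : ℤ) ^ (n * m) • bracket n (p + m) G (bracket p m H F) +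
      (-1 : ℤ) ^ (p * n) • bracket p (m + n) H (bracket m n F G) = 0 := by
  have symm_F := associator_graded_right_symm hF dG dH
  have symm_G := associator_graded_right_symm hG dH dF
  have symm_H := associator_graded_right_symm hH dF dG
  simp only [associator] at symm_F symm_G symm_H
  rw [bracket_bracket hF, bracket_bracket hG, bracket_bracket hH,
    mul_comm m p, mul_comm n m, mul_comm p n]
  simp only [add_comm n m, add_comm p m, add_comm p n] at symm_F symm_G symm_H ⊢
  rcases neg_one_pow_eq_or ℤ (p * m) with sign_pm | sign_pm <;>
  rcases neg_one_pow_eq_or ℤ (m * n) with sign_mn | sign_mn <;>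
  rcases neg_one_pow_eq_or ℤ (n * p) with sign_np | sign_np <;>
  linear_combination (norm := (simp only [sign_pm, sign_mn, sign_np]; module))
    -((-1 : ℤ) ^ (p * m) • symm_F) - (-1 : ℤ) ^ (m * n) • symm_G - (-1 : ℤ) ^ (n * p) • symm_H

end Composition

end SeqOp

/-- the Gerstenhaber bracket on multilinear maps satisfies the graded
Jacobi identity.  Here `f`, `g`, `k` are `K`-multilinear maps with `m+1`, `n+1`, `p+1`
arguments, i.e. of shifted degrees `|f| = m`, `|g| = n`, `|k| = p`, and
`(−1)^{|f||k|}[f,[g,k]] + (−1)^{|g||f|}[g,[k,f]] + (−1)^{|k||g|}[k,[f,g]] = 0`. -/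
theorem gerstenhaber_graded_jacobi
    {K A : Type*} [CommRing K] [AddCommGroup A] [Module K A]
    (m n p : ℕ)
    (f : MultilinearMap K (fun _ : Fin (m + 1) => A) A)
    (g : MultilinearMap K (fun _ : Fin (n + 1) => A) A)
    (k : MultilinearMap K (fun _ : Fin (p + 1) => A) A) :
    ∀ v : Fin (m + n + p + 1) → A,
      (-1 : ℤ) ^ (m * p) •
          recast (show m + (n + p) + 1 = m + n + p + 1 by omega)
            (gbracket ⇑f (gbracket ⇑g ⇑k)) v
        + (-1 : ℤ) ^ (n * m) •
            recast (show n + (p + m) + 1 = m + n + p + 1 by omega)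
              (gbracket ⇑g (gbracket ⇑k ⇑f)) v
        + (-1 : ℤ) ^ (p * n) •
            recast (show p + (m + n) + 1 = m + n + p + 1 by omega)
              (gbracket ⇑k (gbracket ⇑f ⇑g)) v = 0 := by
  intro v
  obtain ⟨a, rfl⟩ := Fin.val_injective.surjective_comp_right v
  have jacobi := congrFun (SeqOp.bracket_graded_jacobi
    (SeqOp.isMultiadditive_ofFin f) (SeqOp.isMultiadditive_ofFin g) (SeqOp.isMultiadditive_ofFin k)
    (SeqOp.dependsOn_ofFin f) (SeqOp.dependsOn_ofFin g) (SeqOp.dependsOn_ofFin k)) a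
  simp only [← SeqOp.ofFin_gbracket] at jacobi
  exact jacobi
end

section
/- The Hochschild differential interacts with the composition product by the Gerstenhaber identity: let A be an associative K-algebra and f : A^m → A, g : A^n → A K-multilinear maps. Then δ(f∘g) = (−1)^{n−1} δf∘g + f∘δg + (−1)^n (g⌣f − (−1)^{mn} f⌣g) as multilinear maps A^{m+n} → A. -/
/-- The cup product of an `(m+1)`-ary and an `(n+1)`-ary operation:
`(f⌣g)(a₁,…,a_{m+n+2}) = f(a₁,…,a_{m+1})·g(a_{m+2},…,a_{m+n+2})`. -/
def cup {A : Type*} [Ring A] {m n : ℕ}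
    (f : (Fin (m + 1) → A) → A) (g : (Fin (n + 1) → A) → A) :
    (Fin (m + n + 2) → A) → A :=
  fun a => f (fun i => a ⟨(i : ℕ), by have := i.isLt; omega⟩)
    * g (fun i => a ⟨m + 1 + (i : ℕ), by have := i.isLt; omega⟩)

/-- The Hochschild coboundary of an `(r+1)`-ary operation. -/
def hdel {A : Type*} [Ring A] {r : ℕ} (f : (Fin (r + 1) → A) → A) :
    (Fin (r + 2) → A) → A :=
  fun a => a 0 * f (fun i => a i.succ)
    + ∑ j : Fin (r + 1), (-1 : ℤ) ^ ((j : ℕ) + 1) •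
        f (fun i : Fin (r + 1) =>
          if (i : ℕ) < (j : ℕ) then a i.castSucc
          else if (i : ℕ) = (j : ℕ) then a i.castSucc * a i.succ
          else a i.succ)
    + (-1 : ℤ) ^ (r + 2) • (f (fun i => a i.castSucc) * a (Fin.last (r + 1)))

/-!
Writing `μ` for the multiplication, and indexing degrees by arity minus one,
`δf = (-1)^m μ∘f - f∘μ`. If `f` is multilinear, `(f∘g)∘h - f∘(g∘h)` collects exactly the ways of
inserting `g` and `h` into two different slots of `f`: this is `f{h, g} + (-1)^{np} f{g, h}`, so the
associator is graded symmetric in `g` and `h` (the right pre-Lie identity). Expanding the three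
coboundaries, the pre-Lie identity for `f, g, μ` leaves only the associator of `μ, f, g`, and `μ`
has just two slots, so that its braces are the two cup products.
-/

namespace Gerstenhaber

open Finset

/-- Value of an operation on the initial entries of a sequence. Feeding operations of all arities
with sequences `ℕ → A` avoids transporting along equalities of arities. -/
def evalSeq {A : Type*} {k : ℕ} (f : (Fin k → A) → A) (u : ℕ → A) : A :=
  f fun i => u i

/-- The sequence with its first `i` entries dropped, so that an operation evaluated on it reads the
block starting at position `i`. -/
def shift {A : Type*} (i : ℕ) (u : ℕ → A) : ℕ → A :=
  fun l => u (i + l)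

/-- The sequence with the block of `n + 1` entries at positions `i, …, i + n` replaced by the
single entry `x`; this is how one operation is fed into a slot of another. -/
def splice {A : Type*} (i n : ℕ) (x : A) (u : ℕ → A) : ℕ → A :=
  fun j => if j < i then u j else if j = i then x else u (j + n)

/-- The sequence with the block of inputs of `g` starting at position `i` replaced by the value of
`g` on it. Thus `evalSeq f (graft g i u)` is the value on `u` of the operadic partial composition
of `g` into slot `i` of `f`. -/
def graft {A : Type*} {n : ℕ} (g : (Fin (n + 1) → A) → A) (i : ℕ) (u : ℕ → A) : ℕ → A :=
  splice i n (evalSeq g (shift i u)) u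

section Sequences

variable {A : Type*}

theorem evalSeq_congr {k : ℕ} (f : (Fin k → A) → A) {u v : ℕ → A} (h : ∀ i < k, u i = v i) :
    evalSeq f u = evalSeq f v :=
  congrArg f (funext fun i => h i i.isLt)

theorem shift_zero (u : ℕ → A) : shift 0 u = u :=
  funext fun l => congrArg u (Nat.zero_add l)

theorem shift_shift (i l : ℕ) (u : ℕ → A) : shift l (shift i u) = shift (i + l) u :=
  funext fun k => congrArg u (Nat.add_assoc i l k).symm

theorem shift_splice_of_lt {i j : ℕ} (hji : j < i) (p : ℕ) (y : A) (u : ℕ → A) :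
    shift i (splice j p y u) = shift (i + p) u := by
  funext l
  simp only [shift, splice]
  grind

theorem shift_splice_add (i l p : ℕ) (y : A) (u : ℕ → A) :
    shift i (splice (i + l) p y u) = splice l p y (shift i u) := by
  funext k
  simp only [shift, splice]
  grind

theorem splice_splice_of_lt {i j : ℕ} (hji : j < i) (n p : ℕ) (x y : A) (u : ℕ → A) :
    splice i n x (splice j p y u) = splice j p y (splice (i + p) n x u) := by
  funext k
  simp only [splice]
  grind

theorem splice_splice_add {l n : ℕ} (hln : l ≤ n) (i p : ℕ) (x y : A) (u : ℕ → A) :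
    splice i n x (splice (i + l) p y u) = splice i (n + p) x u := by
  funext k
  simp only [splice]
  grind

theorem evalSeq_shift_splice_of_add_lt {p i j : ℕ} (h : (Fin (p + 1) → A) → A) (hji : j + p < i)
    (n : ℕ) (x : A) (u : ℕ → A) :
    evalSeq h (shift j (splice i n x u)) = evalSeq h (shift j u) :=
  evalSeq_congr h fun l hl => if_pos (by omega)

theorem graft_graft_of_lt {n p i j : ℕ} (g : (Fin (n + 1) → A) → A) (h : (Fin (p + 1) → A) → A)
    (hji : j < i) (u : ℕ → A) :
    graft g i (graft h j u) = graft h j (graft g (i + p) u) := by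
  simp only [graft, shift_splice_of_lt hji, splice_splice_of_lt hji,
    evalSeq_shift_splice_of_add_lt h (Nat.add_lt_add_right hji p)]

theorem graft_graft_add {n p l : ℕ} (g : (Fin (n + 1) → A) → A) (h : (Fin (p + 1) → A) → A)
    (hln : l ≤ n) (i : ℕ) (u : ℕ → A) :
    graft g i (graft h (i + l) u) =
      splice i (n + p) (evalSeq g (graft h l (shift i u))) u := by
  simp only [graft, shift_splice_add, splice_splice_add hln, shift_shift]

end Sequences

theorem sum_range_eq_sum_range_add_sum_block_add_sum_Ico {M : Type*} [AddCommMonoid M]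
    {m i : ℕ} (hi : i ≤ m) (n : ℕ) (t : ℕ → M) :
    ∑ k ∈ range (m + n + 1), t k =
      ∑ k ∈ range i, t k + ∑ l ∈ range (n + 1), t (i + l) +
        ∑ j ∈ Ico (i + 1) (m + 1), t (j + n) := by
  rw [sum_Ico_add', ← sum_range_add, show i + 1 + n = i + (n + 1) by omega,
    show m + 1 + n = m + n + 1 by omega, sum_range_add_sum_Ico t (by omega)]

section PreLie

variable {A : Type*} [AddCommGroup A] {m n p : ℕ}

theorem evalSeq_gcomp (f : (Fin (m + 1) → A) → A) (g : (Fin (n + 1) → A) → A) (u : ℕ → A) :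
    evalSeq (gcomp f g) u =
      ∑ i ∈ range (m + 1), (-1 : ℤ) ^ (i * n) • evalSeq f (graft g i u) := by
  rw [sum_range]
  rfl

/-- Gerstenhaber's brace `f{g, h}`: the signed sum of all ways to insert both `g` and `h` into `f`
with `g` to the left of `h`. It measures the failure of associativity of the composition product.
The sign is read off from the slots `i < j` of `f`, not from the positions in `u`. -/
def brace (f : (Fin (m + 1) → A) → A) (g : (Fin (n + 1) → A) → A) (h : (Fin (p + 1) → A) → A)
    (u : ℕ → A) : A :=
  ∑ j ∈ range (m + 1), ∑ i ∈ range j,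
    (-1 : ℤ) ^ (i * n + j * p) • evalSeq f (graft h j (graft g i u))

variable {K : Type*} [Semiring K] [Module K A]

theorem evalSeq_splice {k : ℕ} (f : MultilinearMap K (fun _ : Fin k => A) A) {i : ℕ}
    (hi : i < k) (s : ℕ) (x : A) (u : ℕ → A) :
    evalSeq f (splice i s x u) = f.toLinearMap (fun j => splice i s 0 u j) ⟨i, hi⟩ x := by
  rw [MultilinearMap.toLinearMap_apply]
  refine congrArg f (funext fun j => ?_)
  simp only [Function.update_apply, splice, Fin.ext_iff]
  grind

theorem sum_evalSeq_graft_graft_add (f : MultilinearMap K (fun _ : Fin (m + 1) => A) A)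
    (g : (Fin (n + 1) → A) → A) (h : (Fin (p + 1) → A) → A) {i : ℕ} (hi : i < m + 1)
    (u : ℕ → A) :
    ∑ l ∈ range (n + 1), (-1 : ℤ) ^ (l * p) • evalSeq f (graft g i (graft h (i + l) u)) =
      evalSeq f (graft (gcomp g h) i u) := by
  rw [graft, evalSeq_splice f hi, evalSeq_gcomp, map_sum]
  refine sum_congr rfl fun l hl => ?_
  rw [graft_graft_add g h (mem_range_succ_iff.1 hl), evalSeq_splice f hi, map_zsmul]

theorem sum_evalSeq_graft_graft (f : MultilinearMap K (fun _ : Fin (m + 1) => A) A)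
    (g : (Fin (n + 1) → A) → A) (h : (Fin (p + 1) → A) → A) {i : ℕ} (hi : i < m + 1)
    (u : ℕ → A) :
    ∑ k ∈ range (m + n + 1), (-1 : ℤ) ^ (k * p) • evalSeq f (graft g i (graft h k u)) =
      ∑ k ∈ range i, (-1 : ℤ) ^ (k * p) • evalSeq f (graft g i (graft h k u)) +
        (-1 : ℤ) ^ (i * p) • evalSeq f (graft (gcomp g h) i u) +
        ∑ j ∈ Ico (i + 1) (m + 1),
          (-1 : ℤ) ^ ((j + n) * p) • evalSeq f (graft h j (graft g i u)) := by
  rw [sum_range_eq_sum_range_add_sum_block_add_sum_Ico (Nat.lt_succ_iff.1 hi),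
    ← sum_evalSeq_graft_graft_add f g h hi, smul_sum]
  refine congrArg₂ _ (congrArg₂ _ rfl (sum_congr rfl fun l _ => ?_))
    (sum_congr rfl fun j hj => ?_)
  · rw [add_mul, pow_add, mul_smul]
  · rw [graft_graft_of_lt h g (mem_Ico.1 hj).1]

theorem evalSeq_gcomp_gcomp (f : MultilinearMap K (fun _ : Fin (m + 1) => A) A)
    (g : (Fin (n + 1) → A) → A) (h : (Fin (p + 1) → A) → A) (u : ℕ → A) :
    evalSeq (gcomp (gcomp f g) h) u =
      brace f h g u + evalSeq (gcomp f (gcomp g h)) u + (-1 : ℤ) ^ (n * p) • brace f g h u := by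
  have brace_eq : brace f g h u = ∑ i ∈ range (m + 1), ∑ j ∈ Ico (i + 1) (m + 1),
      (-1 : ℤ) ^ (i * n + j * p) • evalSeq f (graft h j (graft g i u)) := by
    simp only [brace, range_eq_Ico]
    rw [sum_Ico_Ico_comm']
  calc
    _ = ∑ i ∈ range (m + 1), (-1 : ℤ) ^ (i * n) • ∑ k ∈ range (m + n + 1),
          (-1 : ℤ) ^ (k * p) • evalSeq f (graft g i (graft h k u)) := by
      simp only [evalSeq_gcomp, smul_sum]
      rw [sum_comm]
      exact sum_congr rfl fun i _ => sum_congr rfl fun k _ => smul_comm _ _ _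
    _ = _ := by
      rw [brace_eq, brace, evalSeq_gcomp, smul_sum, ← sum_add_distrib, ← sum_add_distrib]
      refine sum_congr rfl fun i hi => ?_
      rw [sum_evalSeq_graft_graft f g h (mem_range.1 hi)]
      simp only [smul_add, smul_sum, smul_smul]
      refine congrArg₂ _ (congrArg₂ _ (sum_congr rfl fun k _ => ?_) ?_)
        (sum_congr rfl fun j _ => ?_) <;> congr 1 <;> ring

theorem evalSeq_gcomp_preLie (f : MultilinearMap K (fun _ : Fin (m + 1) => A) A)
    (g : (Fin (n + 1) → A) → A) (h : (Fin (p + 1) → A) → A) (u : ℕ → A) :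
    evalSeq (gcomp (gcomp f g) h) u - evalSeq (gcomp f (gcomp g h)) u =
      (-1 : ℤ) ^ (n * p) •
        (evalSeq (gcomp (gcomp f h) g) u - evalSeq (gcomp f (gcomp h g)) u) := by
  rw [evalSeq_gcomp_gcomp f g h, evalSeq_gcomp_gcomp f h g, mul_comm p n]
  rcases neg_one_pow_eq_or ℤ (n * p) with hnp | hnp <;> rw [hnp] <;> module

end PreLie

section Hochschild

variable {A : Type*} [Ring A] {m n : ℕ}

/-- The multiplication of `A` as a binary operation `μ`, multilinear over `ℤ`; it expresses the
Hochschild coboundary through the composition product. -/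
abbrev mulOp (A : Type*) [Ring A] : MultilinearMap ℤ (fun _ : Fin 2 => A) A :=
  MultilinearMap.mkPiAlgebraFin ℤ 2 A

theorem evalSeq_mulOp (u : ℕ → A) : evalSeq (mulOp A) u = u 0 * u 1 := by
  simp [evalSeq]

theorem evalSeq_cup (f : (Fin (m + 1) → A) → A) (g : (Fin (n + 1) → A) → A) (u : ℕ → A) :
    evalSeq (cup f g) u = evalSeq f u * evalSeq g (shift (m + 1) u) :=
  rfl

theorem evalSeq_gcomp_mulOp_left (f : (Fin (m + 1) → A) → A) (u : ℕ → A) :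
    evalSeq (gcomp (mulOp A) f) u =
      evalSeq f u * u (m + 1) + (-1 : ℤ) ^ m • (u 0 * evalSeq f (shift 1 u)) := by
  simp [evalSeq_gcomp, sum_range_succ, evalSeq_mulOp, graft, splice, shift_zero, add_comm]

theorem brace_mulOp (f : (Fin (m + 1) → A) → A) (g : (Fin (n + 1) → A) → A) (u : ℕ → A) :
    brace (mulOp A) f g u = (-1 : ℤ) ^ n • evalSeq (cup f g) u := by
  simp [brace, sum_range_succ, evalSeq_mulOp, evalSeq_cup, graft, shift_zero,
    shift_splice_of_lt, splice, add_comm]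

theorem evalSeq_hdel (f : (Fin (m + 1) → A) → A) (u : ℕ → A) :
    evalSeq (hdel f) u =
      (-1 : ℤ) ^ m • evalSeq (gcomp (mulOp A) f) u - evalSeq (gcomp f (mulOp A)) u := by
  have hdel_eq : evalSeq (hdel f) u = u 0 * evalSeq f (fun l => u (l + 1)) +
      ∑ j : Fin (m + 1), (-1 : ℤ) ^ ((j : ℕ) + 1) • evalSeq f (splice j 1 (u j * u (j + 1)) u) +
      (-1 : ℤ) ^ (m + 2) • (evalSeq f u * u (m + 1)) := by
    refine congrArg₂ _ (congrArg₂ _ rfl (sum_congr rfl fun j _ => ?_)) rfl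
    refine congrArg _ (congrArg f (funext fun i => ?_))
    simp only [splice]
    grind
  have sum_contractions :
      ∑ j : Fin (m + 1), (-1 : ℤ) ^ ((j : ℕ) + 1) • evalSeq f (splice j 1 (u j * u (j + 1)) u) =
        -evalSeq (gcomp f (mulOp A)) u := by
    simp [evalSeq_gcomp, sum_range, graft, evalSeq_mulOp, shift, pow_succ]
  have shift_one : shift 1 u = fun l => u (l + 1) := funext fun l => congrArg u (add_comm 1 l)
  rw [hdel_eq, sum_contractions, evalSeq_gcomp_mulOp_left, shift_one, smul_add, smul_smul,
    ← pow_add, Even.neg_one_pow ⟨m, rfl⟩, one_smul, pow_add, neg_one_sq, mul_one]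
  abel

theorem evalSeq_gcomp_hdel_left (f : (Fin (m + 1) → A) → A) (g : (Fin (n + 1) → A) → A)
    (u : ℕ → A) :
    evalSeq (gcomp (hdel f) g) u =
      (-1 : ℤ) ^ m • evalSeq (gcomp (gcomp (mulOp A) f) g) u -
        evalSeq (gcomp (gcomp f (mulOp A)) g) u := by
  simp only [evalSeq_gcomp _ g, evalSeq_hdel, smul_sub, sum_sub_distrib, smul_sum, add_comm 1 m,
    smul_comm ((-1 : ℤ) ^ m)]

theorem evalSeq_gcomp_hdel_right {K : Type*} [Semiring K] [Module K A]
    (f : MultilinearMap K (fun _ : Fin (m + 1) => A) A) (g : (Fin (n + 1) → A) → A)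
    (u : ℕ → A) :
    evalSeq (gcomp f (hdel g)) u =
      (-1 : ℤ) ^ n • evalSeq (gcomp f (gcomp (mulOp A) g)) u -
        evalSeq (gcomp f (gcomp g (mulOp A))) u := by
  simp only [evalSeq_gcomp f, smul_sum, ← sum_sub_distrib]
  refine sum_congr rfl fun i hi => ?_
  simp only [graft, evalSeq_splice f (mem_range.1 hi), evalSeq_hdel, map_sub, map_zsmul,
    add_comm 1 n, smul_sub, smul_comm ((-1 : ℤ) ^ n)]

theorem evalSeq_hdel_gcomp {K : Type*} [Semiring K] [Module K A]
    (f : MultilinearMap K (fun _ : Fin (m + 1) => A) A) (g : (Fin (n + 1) → A) → A)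
    (u : ℕ → A) :
    evalSeq (hdel (gcomp f g)) u =
      (-1 : ℤ) ^ n • evalSeq (gcomp (hdel f) g) u + evalSeq (gcomp f (hdel g)) u +
        (-1 : ℤ) ^ (n + 1) •
          (evalSeq (cup g f) u - (-1 : ℤ) ^ ((m + 1) * (n + 1)) • evalSeq (cup f g) u) := by
  have preLie := sub_eq_iff_eq_add.1 (evalSeq_gcomp_preLie f g (mulOp A) u)
  have associator_mulOp : evalSeq (gcomp (gcomp (mulOp A) f) g) u =
      (-1 : ℤ) ^ m • evalSeq (cup g f) u + evalSeq (gcomp (mulOp A) (gcomp f g)) u +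
        (-1 : ℤ) ^ (m * n) • (-1 : ℤ) ^ n • evalSeq (cup f g) u := by
    rw [evalSeq_gcomp_gcomp, brace_mulOp, brace_mulOp]
  rw [evalSeq_hdel, evalSeq_gcomp_hdel_left, evalSeq_gcomp_hdel_right, preLie, associator_mulOp]
  simp only [mul_one, mul_add, add_mul, one_mul, pow_add, pow_one]
  rcases neg_one_pow_eq_or ℤ m with hm | hm <;> rcases neg_one_pow_eq_or ℤ n with hn | hn <;>
    rw [hm, hn] <;> module

end Hochschild

end Gerstenhaber

theorem hochschild_differential_of_comp_product_general
    {K A : Type*} [Semiring K] [Ring A] [Module K A]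
    (m n : ℕ)
    (f : MultilinearMap K (fun _ : Fin (m + 1) => A) A)
    (g : (Fin (n + 1) → A) → A) (v : Fin (m + n + 2) → A) :
    hdel (gcomp ⇑f g) v
      = (-1 : ℤ) ^ n •
          recast (congrArg (· + 1) (Nat.add_right_comm m 1 n)) (gcomp (hdel ⇑f) g) v
        + recast rfl (gcomp ⇑f (hdel g)) v
        + (-1 : ℤ) ^ (n + 1) •
            (recast (congrArg (· + 2) (Nat.add_comm n m)) (cup g ⇑f) v
              - (-1 : ℤ) ^ ((m + 1) * (n + 1)) • cup ⇑f g v) := by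
  obtain ⟨u, rfl⟩ := Fin.val_injective.surjective_comp_right v
  exact Gerstenhaber.evalSeq_hdel_gcomp f g u

/-- the Gerstenhaber identity
`δ(f∘g) = (−1)^{n−1} δf∘g + f∘δg + (−1)^n (g⌣f − (−1)^{mn} f⌣g)` for `K`-multilinear
maps `f`, `g` with `m+1` resp. `n+1` arguments (so the sign exponents `n−1`, `n` and
`mn` of the natural-language statement become `n`, `n+1` and `(m+1)(n+1)`). -/
theorem hochschild_differential_of_comp_product
    {K A : Type*} [CommRing K] [Ring A] [Algebra K A]
    (m n : ℕ)
    (f : MultilinearMap K (fun _ : Fin (m + 1) => A) A)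
    (g : MultilinearMap K (fun _ : Fin (n + 1) => A) A) :
    ∀ v : Fin (m + n + 2) → A,
      hdel (gcomp ⇑f ⇑g) v
        = (-1 : ℤ) ^ n •
            recast (show m + 1 + n + 1 = m + n + 2 by omega) (gcomp (hdel ⇑f) ⇑g) v
          + recast (show m + (n + 1) + 1 = m + n + 2 by omega) (gcomp ⇑f (hdel ⇑g)) v
          + (-1 : ℤ) ^ (n + 1) •
              (recast (show n + m + 2 = m + n + 2 by omega) (cup ⇑g ⇑f) v
                - (-1 : ℤ) ^ ((m + 1) * (n + 1)) • cup ⇑f ⇑g v) :=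
  hochschild_differential_of_comp_product_general m n f g
end

section
/- The cup product of Hochschild cocycles is graded commutative up to a coboundary: let A be an associative K-algebra and f : A^m → A, g : A^n → A K-multilinear Hochschild cocycles (δf = 0 and δg = 0). Then g⌣f − (−1)^{mn} f⌣g = (−1)^n δ(f∘g); in particular f⌣g − (−1)^{mn} g⌣f is a Hochschild coboundary, so that the induced cup product on Hochschild cohomology is graded commutative. -/
/-!
Extend argument tuples to sequences `w : ℕ → A`, so that tuples of different lengths can be compared
without transporting along equalities of arities. Expand `δ(f∘g)(w)`. Multiplying two neighbours
before inserting `g` in slot `i` is the same as inserting `g` first and multiplying neighbours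
afterwards, except when both factors lie in the block fed to `g`; by additivity of `f` in slot `i`
the latter terms assemble into `f∘δg`, up to two terms `f(…, a·g(…), …)` and `f(…, g(…)·a, …)`.
These supply exactly the missing terms of `δf∘g`, and the outer terms of `δf∘g` that do not occur in
`δ(f∘g)` are the two cup products. This is Gerstenhaber's identity `hdel_gcomp`; for cocycles
its two `δ`-terms on the right vanish.
-/

open Finset

namespace HochschildCochain

/-- The value of a `k`-ary operation on the first `k` entries of a sequence; the remaining entries
are ignored. -/
def evalSeq {A : Type*} {k : ℕ} (f : (Fin k → A) → A) (w : ℕ → A) : A :=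
  f (w ∘ Fin.val)

/-- The sequence `w k, w (k + 1), …`, which feeds an operation the arguments starting at `k`. -/
def shift {A : Type*} (k : ℕ) (w : ℕ → A) : ℕ → A :=
  fun i => w (k + i)

/-- The face map `w 0, …, w j * w (j + 1), …` of the Hochschild complex. -/
def contract {A : Type*} [Mul A] (j : ℕ) (w : ℕ → A) : ℕ → A :=
  fun i => if i < j then w i else if i = j then w i * w (i + 1) else w (i + 1)

/-- The sequence `w 0, …, w (i - 1), x, w (i + n + 1), …`, in which `x` replaces the block of
`n + 1` entries starting at `i`. -/
def replaceBlock {A : Type*} (n i : ℕ) (x : A) (w : ℕ → A) : ℕ → A :=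
  fun j => if j < i then w j else if j = i then x else w (j + n)

/-- The sequence `w 0, …, w (i - 1), g (w i, …, w (i + n)), w (i + n + 1), …` on which `f` is
evaluated in the `i`-th summand of `f ∘ g`. -/
def applyAt {A : Type*} {n : ℕ} (g : (Fin (n + 1) → A) → A) (i : ℕ) (w : ℕ → A) : ℕ → A :=
  replaceBlock n i (evalSeq g (shift i w)) w

section Sequences

variable {A : Type*} {n : ℕ} (g : (Fin (n + 1) → A) → A) (w : ℕ → A)

theorem ext_evalSeq [Nonempty A] {k : ℕ} {F G : (Fin k → A) → A}
    (h : ∀ w, evalSeq F w = evalSeq G w) : F = G := by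
  funext v
  obtain ⟨w, rfl⟩ := Fin.val_injective.surjective_comp_right v
  exact h w

theorem evalSeq_add [Add A] {k : ℕ} (F G : (Fin k → A) → A) :
    evalSeq (F + G) w = evalSeq F w + evalSeq G w :=
  rfl

theorem evalSeq_sub [Sub A] {k : ℕ} (F G : (Fin k → A) → A) :
    evalSeq (F - G) w = evalSeq F w - evalSeq G w :=
  rfl

theorem evalSeq_smul {S : Type*} [SMul S A] {k : ℕ} (c : S) (F : (Fin k → A) → A) :
    evalSeq (c • F) w = c • evalSeq F w :=
  rfl

theorem evalSeq_recast {a b : ℕ} (h : a = b) (F : (Fin a → A) → A) :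
    evalSeq (recast h F) w = evalSeq F w :=
  rfl

theorem evalSeq_congr {k : ℕ} (f : (Fin k → A) → A) {w w' : ℕ → A}
    (h : ∀ i < k, w i = w' i) : evalSeq f w = evalSeq f w' :=
  congrArg f (funext fun i => h i i.isLt)

theorem shift_zero : shift 0 w = w := by
  funext k
  simp only [shift, zero_add]

theorem shift_shift (i j : ℕ) : shift i (shift j w) = shift (j + i) w := by
  funext k
  simp only [shift, add_assoc]

theorem applyAt_apply (i j : ℕ) :
    applyAt g i w j
      = if j < i then w j else if j = i then evalSeq g (shift i w) else w (j + n) :=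
  rfl

theorem applyAt_of_lt {i j : ℕ} (h : j < i) : applyAt g i w j = w j := by
  rw [applyAt_apply, if_pos h]

theorem applyAt_self (i : ℕ) : applyAt g i w i = evalSeq g (shift i w) := by
  rw [applyAt_apply, if_neg (lt_irrefl i), if_pos rfl]

theorem applyAt_of_gt {i j : ℕ} (h : i < j) : applyAt g i w j = w (j + n) := by
  rw [applyAt_apply, if_neg h.not_gt, if_neg h.ne']

theorem shift_one_applyAt_zero : shift 1 (applyAt g 0 w) = shift (n + 1) w := by
  funext k
  simp only [shift, applyAt_of_gt g w (show 0 < 1 + k by lia)]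
  congr 1
  lia

theorem shift_one_applyAt_succ (i : ℕ) :
    shift 1 (applyAt g (i + 1) w) = applyAt g i (shift 1 w) := by
  have h_block : shift i (shift 1 w) = shift (i + 1) w := by rw [shift_shift, add_comm]
  funext k
  grind [shift, applyAt_apply]

variable [Mul A]

theorem applyAt_contract_of_lt {i j : ℕ} (h : j < i) :
    applyAt g i (contract j w) = contract j (applyAt g (i + 1) w) := by
  have h_block : shift i (contract j w) = shift (i + 1) w := by
    funext k
    grind [shift, contract]
  funext k
  grind [contract, applyAt_apply]

theorem applyAt_contract_of_gt {i j : ℕ} (h : i < j) :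
    applyAt g i (contract (j + n) w) = contract j (applyAt g i w) := by
  have h_block : evalSeq g (shift i (contract (j + n) w)) = evalSeq g (shift i w) :=
    evalSeq_congr g fun k hk => by grind [shift, contract]
  funext k
  grind [contract, applyAt_apply]

theorem applyAt_contract_add {k : ℕ} (hk : k ≤ n) (i : ℕ) :
    applyAt g i (contract (i + k) w)
      = replaceBlock (n + 1) i (evalSeq g (contract k (shift i w))) w := by
  have h_block : shift i (contract (i + k) w) = contract k (shift i w) := by
    funext l
    grind [shift, contract]
  funext l
  grind [contract, applyAt_apply, replaceBlock]

theorem contract_applyAt_succ_self (i : ℕ) :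
    contract i (applyAt g (i + 1) w)
      = replaceBlock (n + 1) i (w i * evalSeq g (shift (i + 1) w)) w := by
  funext k
  grind [contract, applyAt_apply, replaceBlock]

theorem contract_applyAt_self (i : ℕ) :
    contract i (applyAt g i w)
      = replaceBlock (n + 1) i (evalSeq g (shift i w) * w (i + (n + 1))) w := by
  funext k
  grind [contract, applyAt_apply, replaceBlock]

end Sequences

theorem sum_range_succ_sum_range {M : Type*} [AddCommMonoid M] (N : ℕ) (F : ℕ → ℕ → M) :
    ∑ t ∈ range (N + 1), ∑ j ∈ range N, F t j
      = ∑ i ∈ range N, (∑ j ∈ range (i + 1), F (i + 1) j + ∑ j ∈ Ico i N, F i j) := by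
  have h_split : ∀ t ∈ range (N + 1),
      ∑ j ∈ range N, F t j = ∑ j ∈ range t, F t j + ∑ j ∈ Ico t N, F t j :=
    fun t ht => (sum_range_add_sum_Ico _ (mem_range_succ_iff.1 ht)).symm
  rw [sum_congr rfl h_split, sum_add_distrib, sum_range_succ', sum_range_zero, add_zero,
    sum_range_succ (fun t => ∑ j ∈ Ico t N, F t j), Ico_self, sum_empty, add_zero,
    ← sum_add_distrib]

theorem neg_one_pow_mul_self (k : ℕ) : (-1 : ℤ) ^ k * (-1 : ℤ) ^ k = 1 := by
  rw [← mul_pow, neg_one_mul, neg_neg, one_pow]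

section Additive

variable {A : Type*} [AddCommGroup A] {m n : ℕ}

theorem evalSeq_gcomp (f : (Fin (m + 1) → A) → A) (g : (Fin (n + 1) → A) → A) (w : ℕ → A) :
    evalSeq (gcomp f g) w
      = ∑ i ∈ range (m + 1), (-1 : ℤ) ^ (i * n) • evalSeq f (applyAt g i w) := by
  rw [sum_range]
  rfl

theorem gcomp_zero_left (g : (Fin (n + 1) → A) → A) :
    gcomp (0 : (Fin (m + 1) → A) → A) g = 0 := by
  funext v
  simp only [gcomp, Pi.zero_apply, smul_zero, sum_const_zero]

variable {K : Type*} [Semiring K] [Module K A]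

theorem gcomp_zero_right (f : MultilinearMap K (fun _ : Fin (m + 1) => A) A) :
    gcomp f (0 : (Fin (n + 1) → A) → A) = 0 := by
  funext v
  refine sum_eq_zero fun i _ => ?_
  rw [f.map_coord_zero i (by simp), smul_zero]

/-- The `i`-th slot of `f` as an additive map, the other arguments being those of
`replaceBlock n i _ w`. -/
def slotHom (f : MultilinearMap K (fun _ : Fin (m + 1) => A) A) (n : ℕ) (i : Fin (m + 1))
    (w : ℕ → A) : A →+ A :=
  (f.toLinearMap (fun j => replaceBlock n i 0 w j) i).toAddMonoidHom

theorem slotHom_apply (f : MultilinearMap K (fun _ : Fin (m + 1) => A) A) (n : ℕ) (i : Fin (m + 1))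
    (w : ℕ → A) (x : A) : slotHom f n i w x = evalSeq f (replaceBlock n i x w) := by
  refine congrArg f (funext fun j => ?_)
  rcases eq_or_ne j i with rfl | hj
  · simp [replaceBlock]
  · simp [replaceBlock, hj, Fin.val_ne_of_ne hj]

end Additive

theorem add_add_two_comm (m n : ℕ) : m + n + 2 = n + m + 2 := by
  rw [add_comm m]

section Ring

variable {A : Type*} [Ring A] {m n : ℕ}

theorem evalSeq_hdel {r : ℕ} (f : (Fin (r + 1) → A) → A) (w : ℕ → A) :
    evalSeq (hdel f) w = w 0 * evalSeq f (shift 1 w)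
      + ∑ j ∈ range (r + 1), (-1 : ℤ) ^ (j + 1) • evalSeq f (contract j w)
      + (-1 : ℤ) ^ r • (evalSeq f w * w (r + 1)) := by
  rw [sum_range]
  simp [hdel, evalSeq, shift, contract, Function.comp_def, pow_add, add_comm]

theorem evalSeq_cup (f : (Fin (m + 1) → A) → A) (g : (Fin (n + 1) → A) → A) (w : ℕ → A) :
    evalSeq (cup f g) w = evalSeq f w * evalSeq g (shift (m + 1) w) :=
  rfl

theorem hdel_zsmul {r : ℕ} (c : ℤ) (F : (Fin (r + 1) → A) → A) :
    hdel (c • F) = c • hdel F := by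
  funext v
  simp only [hdel, Pi.smul_apply, smul_add, smul_sum, mul_smul_comm, smul_mul_assoc, smul_comm c]

theorem sum_applyAt_zero_mul (f : (Fin (m + 1) → A) → A) (g : (Fin (n + 1) → A) → A)
    (w : ℕ → A) :
    ∑ t ∈ range (m + 2), (-1 : ℤ) ^ (t * n) •
        (applyAt g t w 0 * evalSeq f (shift 1 (applyAt g t w)))
      = evalSeq g w * evalSeq f (shift (n + 1) w)
        + (-1 : ℤ) ^ n • (w 0 * evalSeq (gcomp f g) (shift 1 w)) := by
  rw [sum_range_succ', add_comm, applyAt_self, shift_zero, shift_one_applyAt_zero, zero_mul,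
    pow_zero, one_smul, evalSeq_gcomp, mul_sum, smul_sum]
  congr 1
  refine sum_congr rfl fun t _ => ?_
  rw [applyAt_of_lt g w t.succ_pos, shift_one_applyAt_succ, mul_smul_comm, smul_smul, ← pow_add,
    add_one_mul, add_comm n]

theorem sum_mul_applyAt_last (f : (Fin (m + 1) → A) → A) (g : (Fin (n + 1) → A) → A)
    (w : ℕ → A) :
    ∑ t ∈ range (m + 2), (-1 : ℤ) ^ (t * n) •
        (evalSeq f (applyAt g t w) * applyAt g t w (m + 1))
      = evalSeq (gcomp f g) w * w (m + n + 1)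
        + (-1 : ℤ) ^ ((m + 1) * n) • (evalSeq f w * evalSeq g (shift (m + 1) w)) := by
  have h_last : evalSeq f (applyAt g (m + 1) w) = evalSeq f w :=
    evalSeq_congr f fun _ hi => applyAt_of_lt g w hi
  rw [sum_range_succ, applyAt_self, h_last, evalSeq_gcomp, sum_mul]
  congr 1
  refine sum_congr rfl fun t ht => ?_
  rw [applyAt_of_gt g w (mem_range.1 ht), smul_mul_assoc, add_right_comm]

theorem evalSeq_gcomp_hdel_left (f : (Fin (m + 1) → A) → A) (g : (Fin (n + 1) → A) → A)
    (w : ℕ → A) :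
    evalSeq (gcomp (hdel f) g) w
      = evalSeq g w * evalSeq f (shift (n + 1) w)
        + (-1 : ℤ) ^ n • (w 0 * evalSeq (gcomp f g) (shift 1 w))
        + ∑ t ∈ range (m + 2), ∑ j ∈ range (m + 1),
            (-1 : ℤ) ^ (t * n) • (-1 : ℤ) ^ (j + 1) • evalSeq f (contract j (applyAt g t w))
        + (-1 : ℤ) ^ m • (evalSeq (gcomp f g) w * w (m + n + 1)
          + (-1 : ℤ) ^ ((m + 1) * n) • (evalSeq f w * evalSeq g (shift (m + 1) w))) := by
  rw [← sum_applyAt_zero_mul, ← sum_mul_applyAt_last, evalSeq_gcomp, smul_sum,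
    ← sum_add_distrib, ← sum_add_distrib]
  refine sum_congr rfl fun t _ => ?_
  rw [evalSeq_hdel, smul_add, smul_add, smul_sum, smul_comm ((-1 : ℤ) ^ m)]

end Ring

section Multilinear

variable {K A : Type*} [Semiring K] [Ring A] [Module K A] {m n : ℕ}
  (f : MultilinearMap K (fun _ : Fin (m + 1) => A) A) (g : (Fin (n + 1) → A) → A)

theorem evalSeq_applyAt_hdel (w : ℕ → A) {i : ℕ} (hi : i < m + 1) :
    evalSeq f (applyAt (hdel g) i w)
      = evalSeq f (contract i (applyAt g (i + 1) w))
        + ∑ k ∈ range (n + 1), (-1 : ℤ) ^ (k + 1) • evalSeq f (applyAt g i (contract (i + k) w))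
        + (-1 : ℤ) ^ n • evalSeq f (contract i (applyAt g i w)) := by
  have h_slot (x : A) : evalSeq f (replaceBlock (n + 1) i x w) = slotHom f (n + 1) ⟨i, hi⟩ w x :=
    (slotHom_apply f (n + 1) ⟨i, hi⟩ w x).symm
  have h_inner : ∀ k ∈ range (n + 1),
      (-1 : ℤ) ^ (k + 1) • evalSeq f (applyAt g i (contract (i + k) w))
        = slotHom f (n + 1) ⟨i, hi⟩ w
            ((-1 : ℤ) ^ (k + 1) • evalSeq g (contract k (shift i w))) := fun k hk => by
    rw [applyAt_contract_add g w (mem_range_succ_iff.1 hk), h_slot, map_zsmul]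
  rw [sum_congr rfl h_inner, contract_applyAt_succ_self, contract_applyAt_self, applyAt, h_slot,
    h_slot, h_slot, evalSeq_hdel, shift_shift, map_add, map_add, map_sum, map_zsmul]
  rfl

theorem sum_evalSeq_applyAt_contract (w : ℕ → A) {i : ℕ} (hi : i < m + 1) :
    ∑ j ∈ range (m + n + 1), (-1 : ℤ) ^ (j + 1) • evalSeq f (applyAt g i (contract j w))
      = ∑ j ∈ range (i + 1), (-1 : ℤ) ^ (j + 1) • evalSeq f (contract j (applyAt g (i + 1) w))
        + (-1 : ℤ) ^ n •
          ∑ j ∈ Ico i (m + 1), (-1 : ℤ) ^ (j + 1) • evalSeq f (contract j (applyAt g i w))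
        + (-1 : ℤ) ^ i • evalSeq f (applyAt (hdel g) i w) := by
  obtain ⟨d, rfl⟩ : ∃ d, m = i + d := ⟨m - i, by lia⟩
  have h_before : ∀ j ∈ range i,
      (-1 : ℤ) ^ (j + 1) • evalSeq f (applyAt g i (contract j w))
        = (-1 : ℤ) ^ (j + 1) • evalSeq f (contract j (applyAt g (i + 1) w)) := fun j hj => by
    rw [applyAt_contract_of_lt g w (mem_range.1 hj)]
  have h_inside : ∀ k ∈ range (n + 1),
      (-1 : ℤ) ^ (i + k + 1) • evalSeq f (applyAt g i (contract (i + k) w))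
        = (-1 : ℤ) ^ i • (-1 : ℤ) ^ (k + 1) • evalSeq f (applyAt g i (contract (i + k) w)) :=
    fun k _ => by rw [smul_smul, ← pow_add, add_assoc]
  have h_after : ∀ k ∈ range d,
      (-1 : ℤ) ^ (i + (n + 1) + k + 1) • evalSeq f (applyAt g i (contract (i + (n + 1) + k) w))
        = (-1 : ℤ) ^ n • (-1 : ℤ) ^ (i + (k + 1) + 1) •
          evalSeq f (contract (i + (k + 1)) (applyAt g i w)) := fun k _ => by
    rw [show i + (n + 1) + k = i + (k + 1) + n by lia,
      applyAt_contract_of_gt g w (show i < i + (k + 1) by lia), smul_smul, ← pow_add]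
    congr 2
    lia
  rw [show i + d + n + 1 = i + (n + 1) + d by lia, sum_range_add, sum_range_add,
    sum_congr rfl h_before, sum_congr rfl h_inside, sum_congr rfl h_after, ← smul_sum, ← smul_sum,
    sum_range_succ _ i, sum_Ico_eq_sum_range, show i + d + 1 - i = d + 1 by lia,
    sum_range_succ' _ d, evalSeq_applyAt_hdel f g w hi, add_zero]
  module

theorem sum_evalSeq_gcomp_contract (w : ℕ → A) :
    ∑ j ∈ range (m + n + 1), (-1 : ℤ) ^ (j + 1) • evalSeq (gcomp f g) (contract j w)
      = (-1 : ℤ) ^ n • ∑ t ∈ range (m + 2), ∑ j ∈ range (m + 1),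
          (-1 : ℤ) ^ (t * n) • (-1 : ℤ) ^ (j + 1) • evalSeq f (contract j (applyAt g t w))
        + evalSeq (gcomp f (hdel g)) w := by
  have h_swap :
      ∑ j ∈ range (m + n + 1), (-1 : ℤ) ^ (j + 1) • evalSeq (gcomp f g) (contract j w)
        = ∑ i ∈ range (m + 1), (-1 : ℤ) ^ (i * n) •
          ∑ j ∈ range (m + n + 1),
            (-1 : ℤ) ^ (j + 1) • evalSeq f (applyAt g i (contract j w)) := by
    simp only [evalSeq_gcomp, smul_sum]
    rw [sum_comm]
    exact sum_congr rfl fun i _ => sum_congr rfl fun j _ => smul_comm _ _ _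
  have h_sign (i : ℕ) : (-1 : ℤ) ^ n * (-1 : ℤ) ^ ((i + 1) * n) = (-1 : ℤ) ^ (i * n) := by
    rw [add_one_mul, pow_add, mul_left_comm, neg_one_pow_mul_self, mul_one]
  rw [h_swap, sum_range_succ_sum_range, evalSeq_gcomp, smul_sum, ← sum_add_distrib]
  refine sum_congr rfl fun i hi => ?_
  rw [sum_evalSeq_applyAt_contract f g w (mem_range.1 hi), ← smul_sum, ← smul_sum, smul_add,
    smul_add, smul_add, smul_smul ((-1) ^ n), h_sign, smul_comm ((-1 : ℤ) ^ n),
    smul_smul _ _ (evalSeq f _), ← pow_add, mul_add_one]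

theorem hdel_gcomp :
    hdel (gcomp f g) = gcomp f (hdel g)
      + (-1 : ℤ) ^ n • recast (show m + 1 + n + 1 = m + n + 2 by lia) (gcomp (hdel f) g)
      + (-1 : ℤ) ^ (n + 1) • (recast (add_add_two_comm n m) (cup g f)
          - (-1 : ℤ) ^ ((m + 1) * (n + 1)) • cup f g) := by
  refine ext_evalSeq fun w => ?_
  simp only [evalSeq_add, evalSeq_sub, evalSeq_smul, evalSeq_recast, evalSeq_cup]
  rw [evalSeq_gcomp_hdel_left, evalSeq_hdel, sum_evalSeq_gcomp_contract]
  linear_combination (norm := module)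
    -neg_one_pow_mul_self n • (w 0 * evalSeq (gcomp f g) (shift 1 w))

variable {f g}

theorem recast_cup_sub_cup_eq_hdel_gcomp (hf : hdel f = 0) (hg : hdel g = 0) :
    recast (add_add_two_comm n m) (cup g f) - (-1 : ℤ) ^ ((m + 1) * (n + 1)) • cup f g
      = (-1 : ℤ) ^ (n + 1) • hdel (gcomp f g) := by
  have h_recast_zero : recast (show m + 1 + n + 1 = m + n + 2 by lia)
      (0 : (Fin (m + 1 + n + 1) → A) → A) = 0 := rfl
  rw [hdel_gcomp, hf, hg, gcomp_zero_left, gcomp_zero_right, h_recast_zero, smul_zero, zero_add,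
    zero_add, smul_smul, neg_one_pow_mul_self, one_smul]

theorem cup_sub_recast_cup_eq_hdel (hf : hdel f = 0) (hg : hdel g = 0) :
    cup f g - (-1 : ℤ) ^ ((m + 1) * (n + 1)) • recast (add_add_two_comm n m) (cup g f)
      = hdel (-(-1 : ℤ) ^ ((m + 1) * (n + 1)) • (-1 : ℤ) ^ (n + 1) • gcomp f g) := by
  rw [hdel_zsmul, hdel_zsmul, ← recast_cup_sub_cup_eq_hdel_gcomp hf hg]
  linear_combination (norm := module) -neg_one_pow_mul_self ((m + 1) * (n + 1)) • cup f g

end Multilinear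

end HochschildCochain

theorem cup_product_graded_commutative_up_to_coboundary_general
    {K A : Type*} [Semiring K] [Ring A] [Module K A]
    (m n : ℕ)
    (f : MultilinearMap K (fun _ : Fin (m + 1) => A) A)
    (g : (Fin (n + 1) → A) → A)
    (hf : ∀ v : Fin (m + 2) → A, hdel f v = 0)
    (hg : ∀ v : Fin (n + 2) → A, hdel g v = 0) :
    (∀ v : Fin (m + n + 2) → A,
      recast (HochschildCochain.add_add_two_comm n m) (cup g f) v
          - (-1 : ℤ) ^ ((m + 1) * (n + 1)) • cup f g v
        = (-1 : ℤ) ^ (n + 1) • hdel (gcomp f g) v) ∧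
    ∃ F : (Fin (m + n + 1) → A) → A, ∀ v : Fin (m + n + 2) → A,
      cup f g v
          - (-1 : ℤ) ^ ((m + 1) * (n + 1)) •
              recast (HochschildCochain.add_add_two_comm n m) (cup g f) v
        = hdel F v :=
  ⟨congrFun (HochschildCochain.recast_cup_sub_cup_eq_hdel_gcomp (funext hf) (funext hg)), _,
    congrFun (HochschildCochain.cup_sub_recast_cup_eq_hdel (funext hf) (funext hg))⟩

/-- for Hochschild cocycles `f`, `g` (with `m+1` resp. `n+1` arguments,
so the sign exponents `mn` and `n` of the natural-language statement become
`(m+1)(n+1)` and `n+1`), `g⌣f − (−1)^{mn} f⌣g = (−1)^n δ(f∘g)`; in particular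
`f⌣g − (−1)^{mn} g⌣f` is a Hochschild coboundary, so the induced cup product on
Hochschild cohomology is graded commutative. -/
theorem cup_product_graded_commutative_up_to_coboundary
    {K A : Type*} [CommRing K] [Ring A] [Algebra K A]
    (m n : ℕ)
    (f : MultilinearMap K (fun _ : Fin (m + 1) => A) A)
    (g : MultilinearMap K (fun _ : Fin (n + 1) => A) A)
    (hf : ∀ v : Fin (m + 2) → A, hdel ⇑f v = 0)
    (hg : ∀ v : Fin (n + 2) → A, hdel ⇑g v = 0) :
    (∀ v : Fin (m + n + 2) → A,
      recast (show n + m + 2 = m + n + 2 by omega) (cup ⇑g ⇑f) v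
          - (-1 : ℤ) ^ ((m + 1) * (n + 1)) • cup ⇑f ⇑g v
        = (-1 : ℤ) ^ (n + 1) • hdel (gcomp ⇑f ⇑g) v) ∧
    ∃ F : (Fin (m + n + 1) → A) → A, ∀ v : Fin (m + n + 2) → A,
      cup ⇑f ⇑g v
          - (-1 : ℤ) ^ ((m + 1) * (n + 1)) •
              recast (show n + m + 2 = m + n + 2 by omega) (cup ⇑g ⇑f) v
        = hdel F v :=
  cup_product_graded_commutative_up_to_coboundary_general m n f g hf hg
end
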